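/- Let k be a field of arbitrary characteristic, let Q be a connected finite acyclic Dynkin quiver with r vertices, let Π = Π(Q) be its preprojective algebra graded by path length, let C be the adjacency matrix of the double quiver, and let h be the Coxeter number of the underlying Dynkin diagram. Suppose ν is a permutation of the vertex set Q_0 which is a Nakayama permutation of Π, i.e., for every i ∈ Q_0 the k-linear dual D(e_i Π) = Hom_k(e_i Π, k) is isomorphic to Π e_{ν(i)} as a left Π-module. Let P be the permutation matrix P = (δ_{ν(i),j})_{i,j}. Then the matrix Hilbert series satisfies h_Π(t)·(1 − Ct + t²·1) = 1 + P t^h in the ring of r×r matrices over k[[t]]; equivalently h_Π(t) = (1 + P t^h)/(1 − Ct + t²). -/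

import Mathlib

/-!
STATEMENT 0: Hilbert series of the preprojective algebra of a connected finite
acyclic non-Dynkin quiver: `h_Π(t) · (1 - C t + t² · 1) = 1` over `k[[t]]`.

A finite quiver is encoded by a vertex count `r`, a finite arrow type and
source/target maps.  The preprojective algebra is presented as the quotient of
the free algebra on generators `e_i` (trivial paths), `α` (original arrows) and
`α*` (reversed arrows) by the path-algebra relations together with the mesh
relations.  The grading is by path length (vertices have weight 0, arrows of
the double quiver weight 1); the degree-`n` piece is the span of the images of
the weight-`n` monomials, and `e_i Π_n e_j` is its image under
`x ↦ e_i * x * e_j`.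
-/

/-- A finite quiver. -/
structure FinQuiver where
  r : ℕ
  Arrow : Type
  [instFintypeArrow : Fintype Arrow]
  src : Arrow → Fin r
  tgt : Arrow → Fin r

attribute [instance] FinQuiver.instFintypeArrow

namespace FinQuiver

variable (Q : FinQuiver)

/-- The underlying graph of `Q` is connected. -/
def Connected : Prop :=
  ∀ i j : Fin Q.r, Relation.ReflTransGen
    (fun a b => ∃ e : Q.Arrow, (Q.src e = a ∧ Q.tgt e = b) ∨ (Q.src e = b ∧ Q.tgt e = a)) i j

/-- `Q` has no oriented cycles. -/
def Acyclic : Prop :=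
  ∀ i : Fin Q.r, ¬ Relation.TransGen (fun a b => ∃ e : Q.Arrow, Q.src e = a ∧ Q.tgt e = b) i i

/-- The Tits quadratic form of `Q` on `ℝ^{Q₀}`. -/
def titsForm (x : Fin Q.r → ℝ) : ℝ :=
  (∑ i, x i ^ 2) - ∑ e : Q.Arrow, x (Q.src e) * x (Q.tgt e)

/-- `Q` is Dynkin iff its Tits form is positive definite. -/
def IsDynkin : Prop := ∀ x : Fin Q.r → ℝ, x ≠ 0 → 0 < Q.titsForm x

/-- Adjacency matrix of `Q`: the `(i,j)` entry counts arrows `i → j`. -/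
def adjMatrix : Matrix (Fin Q.r) (Fin Q.r) ℕ := Matrix.of fun i j =>
  Fintype.card {e : Q.Arrow // Q.src e = i ∧ Q.tgt e = j}

/-- Adjacency matrix `C` of the double quiver `Q̄`. -/
def doubleAdj : Matrix (Fin Q.r) (Fin Q.r) ℕ := Matrix.of fun i j =>
  Q.adjMatrix i j + Q.adjMatrix j i

end FinQuiver

/-- Generators for the path algebra of the double quiver: trivial paths,
original arrows, reversed arrows. -/
inductive PPGen (Q : FinQuiver) : Type
  | vert : Fin Q.r → PPGen Q
  | fwd : Q.Arrow → PPGen Q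
  | bwd : Q.Arrow → PPGen Q

/-- The mesh element `ρ_i = ∑_{src α = i} α α* - ∑_{tgt α = i} α* α`
in the free algebra.  (An arrow `α` runs from `src α` to `tgt α`, and paths
compose left-to-right, so `e_i ρ_i e_i = ρ_i`.) -/
noncomputable def meshElem (k : Type) [Field k] (Q : FinQuiver) (i : Fin Q.r) :
    FreeAlgebra k (PPGen Q) :=
  (∑ e : Q.Arrow, if Q.src e = i then
      FreeAlgebra.ι k (PPGen.fwd e) * FreeAlgebra.ι k (PPGen.bwd e) else 0)
  - ∑ e : Q.Arrow, if Q.tgt e = i then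
      FreeAlgebra.ι k (PPGen.bwd e) * FreeAlgebra.ι k (PPGen.fwd e) else 0

/-- Defining relations of the preprojective algebra: the `e_i` are orthogonal
idempotents summing to `1`, arrows are composable according to souce and target,
and all mesh relations `ρ_i = 0` hold. -/
inductive PPRel (k : Type) [Field k] (Q : FinQuiver) :
    FreeAlgebra k (PPGen Q) → FreeAlgebra k (PPGen Q) → Prop
  | vert_idem (i : Fin Q.r) :
      PPRel k Q (FreeAlgebra.ι k (PPGen.vert i) * FreeAlgebra.ι k (PPGen.vert i))
        (FreeAlgebra.ι k (PPGen.vert i))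
  | vert_orth (i j : Fin Q.r) (h : i ≠ j) :
      PPRel k Q (FreeAlgebra.ι k (PPGen.vert i) * FreeAlgebra.ι k (PPGen.vert j)) 0
  | vert_sum : PPRel k Q (∑ i : Fin Q.r, FreeAlgebra.ι k (PPGen.vert i)) 1
  | fwd_left (e : Q.Arrow) :
      PPRel k Q (FreeAlgebra.ι k (PPGen.vert (Q.src e)) * FreeAlgebra.ι k (PPGen.fwd e))
        (FreeAlgebra.ι k (PPGen.fwd e))
  | fwd_right (e : Q.Arrow) :
      PPRel k Q (FreeAlgebra.ι k (PPGen.fwd e) * FreeAlgebra.ι k (PPGen.vert (Q.tgt e)))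
        (FreeAlgebra.ι k (PPGen.fwd e))
  | bwd_left (e : Q.Arrow) :
      PPRel k Q (FreeAlgebra.ι k (PPGen.vert (Q.tgt e)) * FreeAlgebra.ι k (PPGen.bwd e))
        (FreeAlgebra.ι k (PPGen.bwd e))
  | bwd_right (e : Q.Arrow) :
      PPRel k Q (FreeAlgebra.ι k (PPGen.bwd e) * FreeAlgebra.ι k (PPGen.vert (Q.src e)))
        (FreeAlgebra.ι k (PPGen.bwd e))
  | mesh (i : Fin Q.r) : PPRel k Q (meshElem k Q i) 0

/-- The preprojective algebra `Π(Q)`. -/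
abbrev PreprojAlg (k : Type) [Field k] (Q : FinQuiver) : Type :=
  RingQuot (PPRel k Q)

/-- The image in `Π(Q)` of a generator. -/
noncomputable def ppGen (k : Type) [Field k] (Q : FinQuiver) (g : PPGen Q) :
    PreprojAlg k Q :=
  RingQuot.mkAlgHom k (PPRel k Q) (FreeAlgebra.ι k g)

/-- The idempotent `e_i ∈ Π(Q)`. -/
noncomputable def ppIdem (k : Type) [Field k] (Q : FinQuiver) (i : Fin Q.r) :
    PreprojAlg k Q :=
  ppGen k Q (PPGen.vert i)

/-- Path-length weight of a generator. -/
def ppWt (Q : FinQuiver) : PPGen Q → ℕ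
  | .vert _ => 0
  | .fwd _ => 1
  | .bwd _ => 1

/-- The degree-`n` component `Π(Q)_n`: span of images of weight-`n` monomials. -/
noncomputable def ppPiece (k : Type) [Field k] (Q : FinQuiver) (n : ℕ) :
    Submodule k (PreprojAlg k Q) :=
  Submodule.span k
    {x | ∃ l : List (PPGen Q), (l.map (ppWt Q)).sum = n ∧ x = (l.map (ppGen k Q)).prod}

/-- The subspace `e_i Π(Q)_n e_j`. -/
noncomputable def ppCorner (k : Type) [Field k] (Q : FinQuiver) (n : ℕ) (i j : Fin Q.r) :
    Submodule k (PreprojAlg k Q) :=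
  (ppPiece k Q n).map
    ((LinearMap.mulLeft k (ppIdem k Q i)).comp (LinearMap.mulRight k (ppIdem k Q j)))

/-- The matrix-valued Hilbert series `h_Π(t) = ∑_n [Π(Q)_n] tⁿ` over `k[[t]]`. -/
noncomputable def ppHilb (k : Type) [Field k] (Q : FinQuiver) :
    Matrix (Fin Q.r) (Fin Q.r) (PowerSeries k) :=
  Matrix.of fun i j => PowerSeries.mk fun n => (Module.finrank k (ppCorner k Q n i j) : k)

namespace FinQuiver

/-- The integral Tits form of `Q`. -/
def titsFormZ (Q : FinQuiver) (x : Fin Q.r → ℤ) : ℤ :=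
  (∑ i, x i ^ 2) - ∑ e : Q.Arrow, x (Q.src e) * x (Q.tgt e)

/-- `h` is the Coxeter number of (the underlying Dynkin graph of) `Q`:
the number of roots of the Tits form equals `r·h`. -/
def IsCoxeterNumber (Q : FinQuiver) (h : ℕ) : Prop :=
  {x : Fin Q.r → ℤ | Q.titsFormZ x = 1}.ncard = Q.r * h

end FinQuiver

/-- The right ideal `e_i Π(Q)`, as a `k`-subspace. -/
noncomputable def ppRowIdeal (k : Type) [Field k] (Q : FinQuiver) (i : Fin Q.r) :
    Submodule k (PreprojAlg k Q) :=
  LinearMap.range (LinearMap.mulLeft k (ppIdem k Q i))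

/-- The left ideal `Π(Q) e_j`, as a `k`-subspace. -/
noncomputable def ppColIdeal (k : Type) [Field k] (Q : FinQuiver) (j : Fin Q.r) :
    Submodule k (PreprojAlg k Q) :=
  LinearMap.range (LinearMap.mulRight k (ppIdem k Q j))

lemma mul_mem_ppColIdeal (k : Type) [Field k] (Q : FinQuiver) (j : Fin Q.r)
    (a : PreprojAlg k Q) {x : PreprojAlg k Q} (hx : x ∈ ppColIdeal k Q j) :
    a * x ∈ ppColIdeal k Q j := by
  obtain ⟨y, rfl⟩ := hx
  exact ⟨a * y, by simp [LinearMap.mulRight_apply, mul_assoc]⟩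

lemma mem_ppRowIdeal_mul (k : Type) [Field k] (Q : FinQuiver) (i : Fin Q.r)
    (a : PreprojAlg k Q) {x : PreprojAlg k Q} (hx : x ∈ ppRowIdeal k Q i) :
    x * a ∈ ppRowIdeal k Q i := by
  obtain ⟨y, rfl⟩ := hx
  exact ⟨y * a, by simp [LinearMap.mulLeft_apply, mul_assoc]⟩

/-- `ν` is a Nakayama permutation of `Π(Q)`: for every vertex `i`, the
`k`-linear dual `D(e_i Π)` of the right module `e_i Π` is isomorphic to
`Π e_{ν(i)}` as a left `Π`-module.  The left `Π`-module structure on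
`D(e_i Π)` is `(a • f)(x) = f(x·a)`, so an isomorphism of left `Π`-modules is
a `k`-linear equivalence `φ : Π e_{ν(i)} ≃ D(e_i Π)` with
`φ(a·m)(x) = φ(m)(x·a)` for all `a ∈ Π`, `m ∈ Π e_{ν(i)}`, `x ∈ e_i Π`. -/
def IsNakayamaPerm (k : Type) [Field k] (Q : FinQuiver) (ν : Equiv.Perm (Fin Q.r)) :
    Prop :=
  ∀ i : Fin Q.r,
    ∃ φ : ↥(ppColIdeal k Q (ν i)) ≃ₗ[k] Module.Dual k ↥(ppRowIdeal k Q i),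
      ∀ (a : PreprojAlg k Q) (m : ↥(ppColIdeal k Q (ν i))) (x : ↥(ppRowIdeal k Q i)),
        φ ⟨a * (m : PreprojAlg k Q), mul_mem_ppColIdeal k Q (ν i) a m.2⟩ x =
          φ m ⟨(x : PreprojAlg k Q) * a, mem_ppRowIdeal_mul k Q i a x.2⟩

namespace Preproj

variable {k : Type} [Field k] {Q : FinQuiver}

/-- Arrows of the double quiver. -/
abbrev DArr (Q : FinQuiver) : Type := Q.Arrow ⊕ Q.Arrow

/-- Source of an arrow of the double quiver. -/
def dsrc : DArr Q → Fin Q.r := Sum.elim Q.src Q.tgt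

/-- Target of an arrow of the double quiver. -/
def dtgt : DArr Q → Fin Q.r := Sum.elim Q.tgt Q.src

@[simp] lemma dsrc_swap (a : DArr Q) : dsrc a.swap = dtgt a := by cases a <;> rfl

@[simp] lemma dtgt_swap (a : DArr Q) : dtgt a.swap = dsrc a := by cases a <;> rfl

/-- The sign with which `a* a` enters the mesh relation at the target of `a`. -/
def dsgn (k : Type) [Field k] : DArr Q → k := Sum.elim (fun _ => -1) (fun _ => 1)

/-- The generator of `Π(Q)` attached to an arrow of the double quiver. -/
def dgen : DArr Q → PPGen Q := Sum.elim PPGen.fwd PPGen.bwd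

/-- The element of `Π(Q)` attached to an arrow of the double quiver. -/
noncomputable def darr (k : Type) [Field k] (a : DArr Q) : PreprojAlg k Q := ppGen k Q (dgen a)

@[simp] lemma dsgn_mul_self (a : DArr Q) : dsgn k a * dsgn k a = 1 := by
  cases a <;> simp [dsgn]

lemma idem_mul_self (i : Fin Q.r) : ppIdem k Q i * ppIdem k Q i = ppIdem k Q i := by
  have := RingQuot.mkAlgHom_rel k (PPRel.vert_idem (k := k) i)
  rwa [map_mul] at this

lemma idem_mul_of_ne {i j : Fin Q.r} (h : i ≠ j) : ppIdem k Q i * ppIdem k Q j = 0 := by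
  have := RingQuot.mkAlgHom_rel k (PPRel.vert_orth (k := k) i j h)
  rwa [map_mul, map_zero] at this

lemma sum_idem : ∑ i, ppIdem k Q i = 1 := by
  have := RingQuot.mkAlgHom_rel k (PPRel.vert_sum (k := k) (Q := Q))
  rwa [map_sum, map_one] at this

lemma idem_mul_darr (a : DArr Q) : ppIdem k Q (dsrc a) * darr k a = darr k a := by
  cases a with
  | inl e =>
    have := RingQuot.mkAlgHom_rel k (PPRel.fwd_left (k := k) e)
    rwa [map_mul] at this
  | inr e =>
    have := RingQuot.mkAlgHom_rel k (PPRel.bwd_left (k := k) e)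
    rwa [map_mul] at this

lemma darr_mul_idem (a : DArr Q) : darr k a * ppIdem k Q (dtgt a) = darr k a := by
  cases a with
  | inl e =>
    have := RingQuot.mkAlgHom_rel k (PPRel.fwd_right (k := k) e)
    rwa [map_mul] at this
  | inr e =>
    have := RingQuot.mkAlgHom_rel k (PPRel.bwd_right (k := k) e)
    rwa [map_mul] at this

lemma darr_mul_idem_of_ne {a : DArr Q} {j : Fin Q.r} (h : dtgt a ≠ j) :
    darr k a * ppIdem k Q j = 0 := by
  rw [← darr_mul_idem, mul_assoc, idem_mul_of_ne h, mul_zero]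

lemma idem_mul_darr_of_ne {a : DArr Q} {j : Fin Q.r} (h : j ≠ dsrc a) :
    ppIdem k Q j * darr k a = 0 := by
  rw [← idem_mul_darr, ← mul_assoc, idem_mul_of_ne h, zero_mul]

/-- The mesh relation at `i`, as a sum over all arrows of the double quiver ending at `i`. -/
def MeshSum {B : Type*} [Ring B] [Algebra k B] (f : PPGen Q → B) (i : Fin Q.r) : B :=
  ∑ a : DArr Q, if dtgt a = i then dsgn k a • (f (dgen a.swap) * f (dgen a)) else 0

lemma lift_meshElem {B : Type*} [Ring B] [Algebra k B] (f : PPGen Q → B) (i : Fin Q.r) :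
    FreeAlgebra.lift k f (meshElem k Q i) = MeshSum (k := k) f i := by
  simp only [meshElem, MeshSum, map_sub, map_sum, Fintype.sum_sum_type, dtgt, dsgn, dgen,
    Sum.elim_inl, Sum.elim_inr, Sum.swap_inl, Sum.swap_inr, one_smul, neg_smul]
  rw [sub_eq_add_neg, add_comm, ← Finset.sum_neg_distrib]
  congr 1 <;> refine Finset.sum_congr rfl fun e _ => ?_ <;> split_ifs <;> simp

lemma mkAlgHom_eq_lift :
    RingQuot.mkAlgHom k (PPRel k Q) = FreeAlgebra.lift k (ppGen k Q) := by
  ext g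
  simp [ppGen]

lemma meshSum_darr (i : Fin Q.r) :
    ∑ a : DArr Q, (if dtgt a = i then dsgn k a • (darr k a.swap * darr k a) else 0) = 0 := by
  have := RingQuot.mkAlgHom_rel k (PPRel.mesh (k := k) i)
  rwa [mkAlgHom_eq_lift, map_zero, lift_meshElem] at this

/-- Assignments on generators satisfying the relations of `Π(Q)`. -/
structure Compat {B : Type*} [Ring B] [Algebra k B] (f : PPGen Q → B) : Prop where
  idem (i) : f (.vert i) * f (.vert i) = f (.vert i)
  orth (i j) (h : i ≠ j) : f (.vert i) * f (.vert j) = 0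
  sum : ∑ i, f (.vert i) = 1
  left (a) : f (.vert (dsrc a)) * f (dgen a) = f (dgen a)
  right (a) : f (dgen a) * f (.vert (dtgt a)) = f (dgen a)
  mesh (i) : MeshSum (k := k) f i = 0

/-- The algebra homomorphism out of `Π(Q)` induced by a compatible assignment. -/
noncomputable def lift {B : Type*} [Ring B] [Algebra k B] (f : PPGen Q → B)
    (hf : Compat (k := k) f) : PreprojAlg k Q →ₐ[k] B :=
  RingQuot.liftAlgHom k ⟨FreeAlgebra.lift k f, by
    intro x y h
    cases h with
    | vert_idem i => simpa using hf.idem i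
    | vert_orth i j h => simpa using hf.orth i j h
    | vert_sum => simpa using hf.sum
    | fwd_left e => simpa [dsrc, dgen] using hf.left (.inl e)
    | fwd_right e => simpa [dtgt, dgen] using hf.right (.inl e)
    | bwd_left e => simpa [dsrc, dgen] using hf.left (.inr e)
    | bwd_right e => simpa [dtgt, dgen] using hf.right (.inr e)
    | mesh i => rw [lift_meshElem, map_zero, hf.mesh]⟩

@[simp] lemma lift_gen {B : Type*} [Ring B] [Algebra k B] (f : PPGen Q → B)
    (hf : Compat (k := k) f) (g : PPGen Q) : lift f hf (ppGen k Q g) = f g := by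
  simp [lift, ppGen, RingQuot.liftAlgHom_mkAlgHom_apply]

/-- The image in `Π(Q)` of a monomial in the generators. -/
noncomputable def mono (k : Type) [Field k] (l : List (PPGen Q)) : PreprojAlg k Q :=
  (l.map (ppGen k Q)).prod

/-- The weight of a monomial. -/
def wt (l : List (PPGen Q)) : ℕ := (l.map (ppWt Q)).sum

lemma span_mono : Submodule.span k (Set.range (mono (Q := Q) k)) = ⊤ := by
  have h : Algebra.adjoin k (Set.range (ppGen k Q)) = ⊤ := by
    have h1 : (FreeAlgebra.lift k (ppGen k Q)).range = ⊤ := by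
      rw [← mkAlgHom_eq_lift, AlgHom.range_eq_top]
      exact RingQuot.mkAlgHom_surjective k _
    rw [← h1, ← Algebra.adjoin_range_eq_range_freeAlgebra_lift]
  have h2 := congrArg Subalgebra.toSubmodule h
  rw [Algebra.adjoin_eq_span, Algebra.top_toSubmodule] at h2
  rw [← h2]
  congr 1
  ext x
  constructor
  · rintro ⟨l, rfl⟩
    exact list_prod_mem fun y hy => by
      obtain ⟨g, -, rfl⟩ := List.mem_map.1 hy
      exact Submonoid.subset_closure ⟨g, rfl⟩
  · intro hx
    induction hx using Submonoid.closure_induction with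
    | mem x hx => obtain ⟨g, rfl⟩ := hx; exact ⟨[g], by simp [mono]⟩
    | one => exact ⟨[], by simp [mono]⟩
    | mul x y _ _ hx hy =>
      obtain ⟨l, rfl⟩ := hx
      obtain ⟨m, rfl⟩ := hy
      exact ⟨l ++ m, by simp [mono]⟩

lemma mono_induction {p : PreprojAlg k Q → Prop} (x : PreprojAlg k Q)
    (h1 : ∀ l, p (mono k l)) (h0 : p 0) (hadd : ∀ x y, p x → p y → p (x + y))
    (hsmul : ∀ (c : k) x, p x → p (c • x)) : p x := by
  have hx : x ∈ Submodule.span k (Set.range (mono (Q := Q) k)) := by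
    rw [span_mono]; trivial
  induction hx using Submodule.span_induction with
  | mem x hx => obtain ⟨l, rfl⟩ := hx; exact h1 l
  | zero => exact h0
  | add x y _ _ hx hy => exact hadd x y hx hy
  | smul c x _ hx => exact hsmul c x hx

lemma gen_cases (g : PPGen Q) : (∃ i, g = .vert i) ∨ ∃ a, g = dgen a := by
  cases g with
  | vert i => exact .inl ⟨i, rfl⟩
  | fwd e => exact .inr ⟨.inl e, rfl⟩
  | bwd e => exact .inr ⟨.inr e, rfl⟩

@[simp] lemma ppWt_dgen (a : DArr Q) : ppWt Q (dgen a) = 1 := by cases a <;> rfl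

open Polynomial in
/-- The coaction `Π(Q) → Π(Q)[X]` recording the grading by path length. -/
noncomputable def coact (k : Type) [Field k] (Q : FinQuiver) :
    PreprojAlg k Q →ₐ[k] (PreprojAlg k Q)[X] :=
  lift (fun g => monomial (ppWt Q g) (ppGen k Q g)) {
    idem i := by
      rw [monomial_mul_monomial]; exact congrArg _ (idem_mul_self i)
    orth i j h := by
      rw [monomial_mul_monomial]
      exact (congrArg _ (idem_mul_of_ne h)).trans (map_zero _)
    sum := by
      change ∑ i, monomial 0 (ppIdem k Q i) = 1
      rw [← map_sum, sum_idem, monomial_zero_one]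
    left a := by
      rw [monomial_mul_monomial, ppWt_dgen]; exact congrArg _ (idem_mul_darr a)
    right a := by
      rw [monomial_mul_monomial, ppWt_dgen]; exact congrArg _ (darr_mul_idem a)
    mesh i := by
      have h := congrArg (monomial (R := PreprojAlg k Q) 2) (meshSum_darr (k := k) i)
      rw [map_zero, map_sum] at h
      rw [← h, MeshSum]
      refine Finset.sum_congr rfl fun a _ => ?_
      split_ifs
      · rw [monomial_mul_monomial, ppWt_dgen, ppWt_dgen, smul_monomial]; rfl
      · rw [map_zero] }

open Polynomial in
lemma coact_mono (l : List (PPGen Q)) : coact k Q (mono k l) = monomial (wt l) (mono k l) := by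
  induction l with
  | nil => simp [mono, wt]
  | cons g l ih =>
    have : mono k (g :: l) = ppGen k Q g * mono k l := by simp [mono]
    rw [this, map_mul, ih, coact, lift_gen, monomial_mul_monomial]
    simp [wt]

open Polynomial in
lemma mem_piece_iff {n : ℕ} {x : PreprojAlg k Q} :
    x ∈ ppPiece k Q n ↔ coact k Q x = monomial n x := by
  have hproj (y : PreprojAlg k Q) : (coact k Q y).coeff n ∈ ppPiece k Q n := by
    induction y using mono_induction with
    | h1 l =>
      rw [coact_mono, coeff_monomial]
      split_ifs with h
      · exact Submodule.subset_span ⟨l, h, rfl⟩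
      · exact zero_mem _
    | h0 => simp
    | hadd x y hx hy => rw [map_add, coeff_add]; exact add_mem hx hy
    | hsmul c x hx => rw [map_smul, coeff_smul]; exact Submodule.smul_mem _ _ hx
  constructor
  · intro hx
    induction hx using Submodule.span_induction with
    | mem x hx => obtain ⟨l, rfl, rfl⟩ := hx; exact coact_mono l
    | zero => simp
    | add x y _ _ hx hy => rw [map_add, hx, hy, map_add]
    | smul c x _ hx => rw [map_smul, hx, smul_monomial]
  · intro h
    have := hproj x
    rwa [h, coeff_monomial_same] at this

/-- The projection of `Π(Q)` onto its degree `n` component. -/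
noncomputable def proj (k : Type) [Field k] (Q : FinQuiver) (n : ℕ) :
    PreprojAlg k Q →ₗ[k] PreprojAlg k Q where
  toFun x := (coact k Q x).coeff n
  map_add' x y := by simp
  map_smul' c x := by simp

lemma proj_mono (n : ℕ) (l : List (PPGen Q)) :
    proj k Q n (mono k l) = if wt l = n then mono k l else 0 := by
  simp [proj, coact_mono, Polynomial.coeff_monomial]

lemma proj_mem (n : ℕ) (x : PreprojAlg k Q) : proj k Q n x ∈ ppPiece k Q n := by
  induction x using mono_induction with
  | h1 l =>
    rw [proj_mono]
    split_ifs with h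
    · exact Submodule.subset_span ⟨l, h, rfl⟩
    · exact zero_mem _
  | h0 => simp
  | hadd x y hx hy => rw [map_add]; exact add_mem hx hy
  | hsmul c x hx => rw [map_smul]; exact Submodule.smul_mem _ _ hx

lemma proj_of_mem {n : ℕ} {x : PreprojAlg k Q} (hx : x ∈ ppPiece k Q n) (m : ℕ) :
    proj k Q m x = if n = m then x else 0 := by
  simp [proj, mem_piece_iff.1 hx, Polynomial.coeff_monomial]

lemma proj_add_mul {m : ℕ} {y : PreprojAlg k Q} (hy : y ∈ ppPiece k Q m) (n : ℕ)
    (x : PreprojAlg k Q) : proj k Q (n + m) (x * y) = proj k Q n x * y := by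
  simp [proj, mem_piece_iff.1 hy, Polynomial.coeff_mul_monomial]

lemma proj_zero_mul_of_pos {m : ℕ} {y : PreprojAlg k Q} (hy : y ∈ ppPiece k Q (m + 1))
    (x : PreprojAlg k Q) : proj k Q 0 (x * y) = 0 := by
  simp [proj, mem_piece_iff.1 hy, Polynomial.mul_coeff_zero, Polynomial.coeff_monomial]

lemma mul_mem_piece {m n : ℕ} {x y : PreprojAlg k Q} (hx : x ∈ ppPiece k Q m)
    (hy : y ∈ ppPiece k Q n) : x * y ∈ ppPiece k Q (m + n) := by
  rw [mem_piece_iff] at *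
  rw [map_mul, hx, hy, Polynomial.monomial_mul_monomial]

lemma gen_mem_piece (g : PPGen Q) : ppGen k Q g ∈ ppPiece k Q (ppWt Q g) :=
  Submodule.subset_span ⟨[g], by simp, by simp⟩

lemma idem_mem_piece (i : Fin Q.r) : ppIdem k Q i ∈ ppPiece k Q 0 := gen_mem_piece (.vert i)

lemma darr_mem_piece (a : DArr Q) : darr k a ∈ ppPiece k Q 1 := by
  simpa [darr] using gen_mem_piece (k := k) (dgen a)

lemma exists_proj_eq_zero (x : PreprojAlg k Q) : ∃ N, ∀ n, N ≤ n → proj k Q n x = 0 :=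
  ⟨(coact k Q x).natDegree + 1, fun _ hn =>
    Polynomial.coeff_eq_zero_of_natDegree_lt (Nat.lt_of_succ_le hn)⟩

lemma mem_corner_iff {n : ℕ} {i j : Fin Q.r} {x : PreprojAlg k Q} :
    x ∈ ppCorner k Q n i j ↔
      x ∈ ppPiece k Q n ∧ ppIdem k Q i * x = x ∧ x * ppIdem k Q j = x := by
  constructor
  · rintro ⟨y, hy, rfl⟩
    refine ⟨?_, ?_, ?_⟩
    · simpa using mul_mem_piece (idem_mem_piece i) (mul_mem_piece hy (idem_mem_piece j))
    · simp [← mul_assoc, idem_mul_self]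
    · simp [mul_assoc, idem_mul_self]
  · rintro ⟨h1, h2, h3⟩
    exact ⟨x, h1, by simp [h2, h3]⟩

/-- The relations among the arrows, viewed as generators of the augmentation ideal of `Π(Q)` as a
left module: the composability relations and the mesh relations. -/
noncomputable def relSub (k : Type) [Field k] (Q : FinQuiver) :
    Submodule (PreprojAlg k Q) (DArr Q → PreprojAlg k Q) where
  carrier := {y | ∃ x : Fin Q.r → PreprojAlg k Q, ∀ a,
    y a * ppIdem k Q (dsrc a) = dsgn k a • (x (dtgt a) * darr k a.swap)}
  zero_mem' := ⟨0, by simp⟩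
  add_mem' := by
    rintro y z ⟨x, hx⟩ ⟨w, hw⟩
    exact ⟨x + w, fun a => by simp [add_mul, hx, hw]⟩
  smul_mem' := by
    rintro c y ⟨x, hx⟩
    exact ⟨c • x, fun a => by simp [mul_assoc, hx]⟩

/-- The left module presented by the arrows modulo `relSub`. -/
def AugMod (k : Type) [Field k] (Q : FinQuiver) : Type :=
  (DArr Q → PreprojAlg k Q) ⧸ relSub k Q

noncomputable instance : AddCommGroup (AugMod k Q) :=
  inferInstanceAs (AddCommGroup ((DArr Q → PreprojAlg k Q) ⧸ relSub k Q))

noncomputable instance : Module (PreprojAlg k Q) (AugMod k Q) :=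
  inferInstanceAs (Module (PreprojAlg k Q) ((DArr Q → PreprojAlg k Q) ⧸ relSub k Q))

noncomputable instance : Module k (AugMod k Q) :=
  Module.compHom (AugMod k Q) (algebraMap k (PreprojAlg k Q))

lemma smul_augMod (c : k) (m : AugMod k Q) : c • m = algebraMap k (PreprojAlg k Q) c • m := rfl

instance : IsScalarTower k (PreprojAlg k Q) (AugMod k Q) :=
  ⟨fun c x m => by rw [smul_augMod, Algebra.smul_def, mul_smul]⟩

instance : SMulCommClass (PreprojAlg k Q) k (AugMod k Q) :=
  ⟨fun x c m => by rw [smul_augMod, smul_augMod, ← mul_smul, ← mul_smul, Algebra.commutes]⟩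

instance : SMulCommClass k (PreprojAlg k Q) (AugMod k Q) := SMulCommClass.symm _ _ _

/-- The quotient map onto `AugMod`. -/
noncomputable def augMk (k : Type) [Field k] (Q : FinQuiver) :
    (DArr Q → PreprojAlg k Q) →ₗ[PreprojAlg k Q] AugMod k Q :=
  (relSub k Q).mkQ

lemma augMk_eq_zero {y : DArr Q → PreprojAlg k Q} : augMk k Q y = 0 ↔ y ∈ relSub k Q :=
  Submodule.Quotient.mk_eq_zero _

/-- The class of an arrow in `AugMod`. -/
noncomputable def arrowClass (k : Type) [Field k] (a : DArr Q) : AugMod k Q :=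
  open Classical in augMk k Q (Pi.single a 1)

lemma idem_smul_arrowClass (a : DArr Q) :
    ppIdem k Q (dsrc a) • arrowClass k a = arrowClass k a := by
  classical
  rw [arrowClass, ← map_smul, ← sub_eq_zero, ← map_sub, augMk_eq_zero]
  refine ⟨0, fun b => ?_⟩
  by_cases h : b = a
  · subst h
    simp [sub_mul, idem_mul_self]
  · simp [h]

lemma sum_smul_arrowClass (y : DArr Q → PreprojAlg k Q) :
    ∑ a, y a • arrowClass k a = augMk k Q y := by
  classical
  simp only [arrowClass, ← map_smul, ← map_sum]
  congr 1
  ext b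
  simp [Finset.sum_apply, Pi.single_apply]

lemma meshSum_arrowClass (i : Fin Q.r) :
    ∑ a : DArr Q, (if dtgt a = i then dsgn k a • (darr k a.swap • arrowClass k a) else 0) = 0 := by
  classical
  have h := sum_smul_arrowClass (k := k) (Q := Q)
    fun a => if dtgt a = i then dsgn k a • darr k a.swap else 0
  have h2 : augMk k Q (fun a => if dtgt a = i then dsgn k a • darr k a.swap else 0) = 0 := by
    rw [augMk_eq_zero]
    refine ⟨Pi.single i 1, fun a => ?_⟩
    by_cases hi : dtgt a = i
    · have := darr_mul_idem (k := k) a.swap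
      rw [dtgt_swap] at this
      simp [hi, this]
    · simp [hi]
  rw [h2] at h
  refine Eq.trans (Finset.sum_congr rfl fun a _ => ?_) h
  split_ifs
  · exact (smul_assoc _ _ _).symm
  · exact (zero_smul _ _).symm

/-- The extension of `k^{Q₀}` by `AugMod` carrying the action of `Π(Q)`. -/
abbrev ExtMod (k : Type) [Field k] (Q : FinQuiver) : Type := AugMod k Q × (Fin Q.r → k)

/-- Left multiplication on `AugMod` as a `k`-linear endomorphism. -/
noncomputable abbrev augAct (x : PreprojAlg k Q) : AugMod k Q →ₗ[k] AugMod k Q :=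
  Module.toModuleEnd k (AugMod k Q) x

/-- The action of a generator of `Π(Q)` on `ExtMod`. -/
noncomputable def actGen (k : Type) [Field k] (Q : FinQuiver) (g : PPGen Q) :
    Module.End k (ExtMod k Q) :=
  match g with
  | .vert i => LinearMap.prodMap (augAct (ppIdem k Q i))
      ((LinearMap.single k (fun _ => k) i) ∘ₗ LinearMap.proj i)
  | .fwd e => LinearMap.prod
      ((augAct (darr k (.inl e))) ∘ₗ LinearMap.fst k _ _ +
        ((LinearMap.proj (Q.tgt e)).smulRight (arrowClass k (.inl e))) ∘ₗ LinearMap.snd k _ _) 0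
  | .bwd e => LinearMap.prod
      ((augAct (darr k (.inr e))) ∘ₗ LinearMap.fst k _ _ +
        ((LinearMap.proj (Q.src e)).smulRight (arrowClass k (.inr e))) ∘ₗ LinearMap.snd k _ _) 0

lemma actGen_vert (i : Fin Q.r) (m : ExtMod k Q) :
    actGen k Q (.vert i) m = (ppIdem k Q i • m.1, Pi.single i (m.2 i)) := rfl

lemma actGen_dgen (a : DArr Q) (m : ExtMod k Q) :
    actGen k Q (dgen a) m = (darr k a • m.1 + m.2 (dtgt a) • arrowClass k a, 0) := by
  cases a <;> rfl

lemma compat_actGen : Compat (k := k) (actGen k Q) where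
  idem i := by
    refine LinearMap.ext fun m => ?_
    simp [Module.End.mul_apply, actGen_vert, ← mul_smul, idem_mul_self]
  orth i j h := by
    refine LinearMap.ext fun m => ?_
    simp [Module.End.mul_apply, actGen_vert, ← mul_smul, idem_mul_of_ne h, h]
  sum := by
    refine LinearMap.ext fun m => ?_
    simp only [LinearMap.sum_apply, actGen_vert, Module.End.one_apply]
    refine Prod.ext ?_ ?_
    · rw [Prod.fst_sum, ← Finset.sum_smul, sum_idem, one_smul]
    · rw [Prod.snd_sum, Finset.univ_sum_single]
  left a := by
    refine LinearMap.ext fun m => ?_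
    simp [Module.End.mul_apply, actGen_vert, actGen_dgen, ← mul_smul, idem_mul_darr,
      smul_comm (ppIdem k Q (dsrc a)) (m.2 (dtgt a)), idem_smul_arrowClass]
  right a := by
    refine LinearMap.ext fun m => ?_
    simp [Module.End.mul_apply, actGen_vert, actGen_dgen, ← mul_smul, darr_mul_idem]
  mesh i := by
    refine LinearMap.ext fun m => ?_
    have h1 := congrArg (fun z => z • m.1) (meshSum_darr (k := k) i)
    have h2 := congrArg (fun z => m.2 i • z) (meshSum_arrowClass (k := k) i)
    beta_reduce at h1 h2
    rw [Finset.sum_smul, zero_smul] at h1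
    rw [smul_zero, Finset.smul_sum] at h2
    rw [MeshSum, LinearMap.sum_apply, LinearMap.zero_apply]
    have h3 := congrArg₂ (· + ·) h1 h2
    simp only [add_zero, ← Finset.sum_add_distrib] at h3
    have h4 : ∀ a : DArr Q, (if dtgt a = i then
        dsgn k a • (actGen k Q (dgen a.swap) * actGen k Q (dgen a)) else 0) m =
        LinearMap.inl k (AugMod k Q) (Fin Q.r → k)
          ((if dtgt a = i then dsgn k a • (darr k a.swap * darr k a) else 0) • m.1 +
          m.2 i • (if dtgt a = i then dsgn k a • (darr k a.swap • arrowClass k a) else 0)) := by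
      intro a
      split_ifs with h
      · subst h
        simp [Module.End.mul_apply, actGen_dgen, mul_smul, smul_assoc,
          smul_comm (m.2 (dtgt a)) (dsgn k a), smul_comm (m.2 (dtgt a)) (darr k a.swap)]
      · rw [zero_smul, smul_zero, add_zero, map_zero]; rfl
    rw [Finset.sum_congr rfl fun a _ => h4 a, ← map_sum, h3, map_zero]

/-- The representation of `Π(Q)` on `ExtMod`. -/
noncomputable def act (k : Type) [Field k] (Q : FinQuiver) :
    PreprojAlg k Q →ₐ[k] Module.End k (ExtMod k Q) :=
  lift (actGen k Q) compat_actGen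

lemma act_inl (x : PreprojAlg k Q) (m : AugMod k Q) : act k Q x (m, 0) = (x • m, 0) := by
  induction x using mono_induction generalizing m with
  | h1 l =>
    induction l generalizing m with
    | nil => simp [mono]
    | cons g l ih =>
      have : mono k (g :: l) = ppGen k Q g * mono k l := by simp [mono]
      rw [this, map_mul, Module.End.mul_apply, ih, act, lift_gen, mul_smul]
      rcases gen_cases g with ⟨i, rfl⟩ | ⟨a, rfl⟩
      · rw [actGen_vert]; simp [ppIdem]
      · rw [actGen_dgen]; simp [darr]
  | h0 => rw [map_zero, zero_smul]; rfl
  | hadd x y hx hy => simp [hx, hy, add_smul]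
  | hsmul c x hx => simp [hx]

lemma idem_ne_zero (i : Fin Q.r) : ppIdem k Q i ≠ 0 := by
  intro h
  have h1 := congrArg (fun x => (act k Q x (0, fun _ => 1)).2 i) h
  simp [act, ppIdem, actGen_vert] at h1

lemma exists_of_sum_mul_darr_eq_zero {y : DArr Q → PreprojAlg k Q}
    (h : ∑ a, y a * darr k a = 0) : ∃ x : Fin Q.r → PreprojAlg k Q, ∀ a,
      y a * ppIdem k Q (dsrc a) = dsgn k a • (x (dtgt a) * darr k a.swap) := by
  have h1 := congrArg (fun x => (act k Q x (0, fun _ => 1)).1) h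
  have h2 (a : DArr Q) : act k Q (darr k a) (0, fun _ => 1) = (arrowClass k a, 0) := by
    rw [act, darr, lift_gen, actGen_dgen]; simp
  simp only [map_sum, map_mul, map_zero, LinearMap.sum_apply, Module.End.mul_apply, h2, act_inl,
    Prod.fst_sum, LinearMap.zero_apply, Prod.fst_zero, sum_smul_arrowClass] at h1
  rwa [augMk_eq_zero] at h1

lemma mono_concat (l : List (PPGen Q)) (g : PPGen Q) :
    mono k (l ++ [g]) = mono k l * ppGen k Q g := by simp [mono]

lemma wt_concat (l : List (PPGen Q)) (g : PPGen Q) : wt (l ++ [g]) = wt l + ppWt Q g := by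
  simp [wt]

lemma sum_mul_darr_mul_idem (w : DArr Q → PreprojAlg k Q) (j : Fin Q.r) :
    (∑ a, w a * darr k a) * ppIdem k Q j = ∑ a, (if dtgt a = j then w a else 0) * darr k a := by
  rw [Finset.sum_mul]
  refine Finset.sum_congr rfl fun a _ => ?_
  split_ifs with h
  · rw [mul_assoc, ← h, darr_mul_idem]
  · rw [mul_assoc, darr_mul_idem_of_ne h, mul_zero, zero_mul]

lemma mono_eq_sum_mul_darr (n : ℕ) (l : List (PPGen Q)) (hl : wt l = n + 1) :
    ∃ w : DArr Q → PreprojAlg k Q, (∀ a, w a ∈ ppPiece k Q n) ∧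
      mono k l = ∑ a, w a * darr k a := by
  classical
  induction l using List.reverseRecOn with
  | nil => simp [wt] at hl
  | append_singleton l g ih =>
    rw [wt_concat] at hl
    rw [mono_concat]
    rcases gen_cases g with ⟨i, rfl⟩ | ⟨a, rfl⟩
    · obtain ⟨w, hw, h⟩ := ih (by simpa [ppWt] using hl)
      refine ⟨fun a => if dtgt a = i then w a else 0, fun a => ?_, ?_⟩
      · dsimp only
        split_ifs
        · exact hw a
        · exact zero_mem _
      · rw [h]
        exact sum_mul_darr_mul_idem w i
    · rw [ppWt_dgen, Nat.add_right_cancel_iff] at hl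
      refine ⟨Pi.single a (mono k l), fun b => ?_, ?_⟩
      · rcases eq_or_ne b a with rfl | hb
        · rw [Pi.single_eq_same]
          exact Submodule.subset_span ⟨l, hl, rfl⟩
        · rw [Pi.single_eq_of_ne hb]
          exact zero_mem _
      · rw [Finset.sum_eq_single a]
        · rw [Pi.single_eq_same]; rfl
        · intro b _ hb
          rw [Pi.single_eq_of_ne hb, zero_mul]
        · simp

lemma piece_succ {n : ℕ} {z : PreprojAlg k Q} (hz : z ∈ ppPiece k Q (n + 1)) :
    ∃ w : DArr Q → PreprojAlg k Q, (∀ a, w a ∈ ppPiece k Q n) ∧ z = ∑ a, w a * darr k a := by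
  induction hz using Submodule.span_induction with
  | mem x hx =>
    obtain ⟨l, hl, rfl⟩ := hx
    exact mono_eq_sum_mul_darr n l hl
  | zero => exact ⟨0, fun _ => zero_mem _, by simp⟩
  | add x y _ _ hx hy =>
    obtain ⟨w, hw, rfl⟩ := hx
    obtain ⟨v, hv, rfl⟩ := hy
    exact ⟨w + v, fun a => add_mem (hw a) (hv a), by simp [add_mul, Finset.sum_add_distrib]⟩
  | smul c x _ hx =>
    obtain ⟨w, hw, rfl⟩ := hx
    exact ⟨c • w, fun a => Submodule.smul_mem _ c (hw a), by simp [Finset.smul_sum]⟩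

lemma corner_mul_darr {n : ℕ} {i : Fin Q.r} {a : DArr Q} {x : PreprojAlg k Q}
    (hx : x ∈ ppCorner k Q n i (dsrc a)) : x * darr k a ∈ ppCorner k Q (n + 1) i (dtgt a) := by
  rw [mem_corner_iff] at *
  exact ⟨mul_mem_piece hx.1 (darr_mem_piece a), by rw [← mul_assoc, hx.2.1],
    by rw [mul_assoc, darr_mul_idem]⟩

/-- The map `(y_a) ↦ ∑ y_a a` onto a corner of `Π(Q)`. -/
noncomputable def cornerSum (k : Type) [Field k] (Q : FinQuiver) (n : ℕ) (i j : Fin Q.r) :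
    ((a : {a : DArr Q // dtgt a = j}) → ppCorner k Q n i (dsrc a.1)) →ₗ[k]
      ppCorner k Q (n + 1) i j :=
  LinearMap.codRestrict _
    (∑ a : {a : DArr Q // dtgt a = j},
      LinearMap.mulRight k (darr k a.1) ∘ₗ (ppCorner k Q n i (dsrc a.1)).subtype ∘ₗ
        LinearMap.proj a)
    (fun y => by
      rw [LinearMap.sum_apply]
      refine sum_mem fun a _ => ?_
      have h := corner_mul_darr (y a).2
      rwa [a.2] at h)

lemma coe_cornerSum {n : ℕ} {i j : Fin Q.r}
    (y : (a : {a : DArr Q // dtgt a = j}) → ppCorner k Q n i (dsrc a.1)) :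
    (cornerSum k Q n i j y : PreprojAlg k Q) =
      ∑ a : {a : DArr Q // dtgt a = j}, (y a : PreprojAlg k Q) * darr k a.1 := by
  simp [cornerSum, LinearMap.sum_apply]

lemma sum_subtype_eq {j : Fin Q.r} (w : DArr Q → PreprojAlg k Q) :
    ∑ a : {a : DArr Q // dtgt a = j}, w a.1 * darr k a.1 =
      ∑ a, (if dtgt a = j then w a else 0) * darr k a := by
  simp only [ite_mul, zero_mul, ← Finset.sum_filter]
  exact (Finset.sum_subtype _ (by simp) fun a => w a * darr k a).symm

lemma cornerSum_surjective (n : ℕ) (i j : Fin Q.r) :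
    Function.Surjective (cornerSum k Q n i j) := by
  rintro ⟨z, hz⟩
  obtain ⟨h1, h2, h3⟩ := mem_corner_iff.1 hz
  obtain ⟨w, hw, h⟩ := piece_succ h1
  refine ⟨fun a => ⟨ppIdem k Q i * w a.1 * ppIdem k Q (dsrc a.1), ?_⟩, Subtype.ext ?_⟩
  · exact ⟨w a.1, hw _, by simp [mul_assoc]⟩
  · rw [coe_cornerSum]
    rw [sum_subtype_eq (fun a => ppIdem k Q i * w a * ppIdem k Q (dsrc a)),
      ← sum_mul_darr_mul_idem]
    simp only [mul_assoc, idem_mul_darr]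
    rw [← Finset.mul_sum, ← h, h2, h3]

/-- The map `x ↦ (± x a*)` out of a corner of `Π(Q)`. -/
noncomputable def cornerMesh (k : Type) [Field k] (Q : FinQuiver) (n : ℕ) (i j : Fin Q.r) :
    ppCorner k Q n i j →ₗ[k]
      ((a : {a : DArr Q // dtgt a = j}) → ppCorner k Q (n + 1) i (dsrc a.1)) :=
  LinearMap.pi fun a => dsgn k a.1 • LinearMap.restrict (LinearMap.mulRight k (darr k a.1.swap))
    (fun x hx => by
      have := corner_mul_darr (a := a.1.swap) (x := x) (by rwa [dsrc_swap, a.2])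
      rwa [dtgt_swap] at this)

lemma coe_cornerMesh {n : ℕ} {i j : Fin Q.r} (x : ppCorner k Q n i j)
    (a : {a : DArr Q // dtgt a = j}) :
    (cornerMesh k Q n i j x a : PreprojAlg k Q) =
      dsgn k a.1 • ((x : PreprojAlg k Q) * darr k a.1.swap) := by
  rfl

lemma exists_of_cornerSum_eq_zero {n : ℕ} {i j : Fin Q.r}
    {y : (a : {a : DArr Q // dtgt a = j}) → ppCorner k Q n i (dsrc a.1)}
    (hy : cornerSum k Q n i j y = 0) :
    ∃ x, ∀ a, (y a : PreprojAlg k Q) = dsgn k a.1 • (x * darr k a.1.swap) := by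
  classical
  have h : (cornerSum k Q n i j y : PreprojAlg k Q) = 0 := by rw [hy]; rfl
  let w : DArr Q → PreprojAlg k Q := fun a => if h : dtgt a = j then y ⟨a, h⟩ else 0
  have hw (a : {a : DArr Q // dtgt a = j}) : w a.1 = y a := by simp [w, a.2]
  rw [coe_cornerSum, ← Finset.sum_congr rfl fun a _ => congrArg (· * darr k a.1) (hw a),
    sum_subtype_eq] at h
  have hw' (a : DArr Q) : (if dtgt a = j then w a else 0) = w a := by
    split_ifs with h
    · rfl
    · simp [w, h]
  simp only [hw'] at h
  obtain ⟨x, hx⟩ := exists_of_sum_mul_darr_eq_zero h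
  refine ⟨x j, fun a => ?_⟩
  have h1 := hx a.1
  rwa [hw, (mem_corner_iff.1 (y a).2).2.2, a.2] at h1

lemma ker_cornerSum_zero (i j : Fin Q.r) : LinearMap.ker (cornerSum k Q 0 i j) = ⊥ := by
  rw [LinearMap.ker_eq_bot']
  intro y hy
  obtain ⟨x, hx⟩ := exists_of_cornerSum_eq_zero hy
  ext a
  have h1 := proj_of_mem (mem_corner_iff.1 (y a).2).1 0
  rw [if_pos rfl] at h1
  rw [← h1, hx, map_smul, proj_zero_mul_of_pos (m := 0) (by simpa using darr_mem_piece a.1.swap),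
    smul_zero]
  rfl

lemma ker_cornerSum_succ (n : ℕ) (i j : Fin Q.r) :
    LinearMap.ker (cornerSum k Q (n + 1) i j) = LinearMap.range (cornerMesh k Q n i j) := by
  apply le_antisymm
  · intro y hy
    obtain ⟨x, hx⟩ := exists_of_cornerSum_eq_zero (LinearMap.mem_ker.1 hy)
    refine ⟨⟨ppIdem k Q i * proj k Q n x * ppIdem k Q j,
      ⟨proj k Q n x, proj_mem n x, by simp [mul_assoc]⟩⟩, ?_⟩
    ext a
    obtain ⟨h1, h2, -⟩ := mem_corner_iff.1 (y a).2
    have h3 := proj_of_mem h1 (n + 1)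
    rw [if_pos rfl] at h3
    have h4 := idem_mul_darr (k := k) a.1.swap
    rw [dsrc_swap, a.2] at h4
    rw [coe_cornerMesh, mul_assoc, h4, mul_assoc, ← proj_add_mul (darr_mem_piece _),
      ← mul_smul_comm, ← map_smul, ← hx, h3, h2]
  · rintro _ ⟨x, rfl⟩
    rw [LinearMap.mem_ker]
    ext
    rw [coe_cornerSum]
    have h := congrArg ((x : PreprojAlg k Q) * ·) (meshSum_darr (k := k) j)
    simp only [mul_zero] at h
    rw [ZeroMemClass.coe_zero, ← h, ← Finset.sum_filter,
      Finset.sum_subtype _ (p := fun a => dtgt a = j) (by simp), Finset.mul_sum]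
    refine Finset.sum_congr rfl fun a _ => ?_
    rw [coe_cornerMesh, smul_mul_assoc, mul_smul_comm, mul_assoc]

/-- The dimension of `e_i Π(Q)_n e_j`. -/
noncomputable def cdim (k : Type) [Field k] (Q : FinQuiver) (n : ℕ) (i j : Fin Q.r) : ℕ :=
  Module.finrank k (ppCorner k Q n i j)

instance free_corner (n : ℕ) (i j : Fin Q.r) : Module.Free k (ppCorner k Q n i j) :=
  Module.Free.of_divisionRing k (ppCorner k Q n i j)

lemma sum_cdim_zero [FiniteDimensional k (PreprojAlg k Q)] (i j : Fin Q.r) :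
    ∑ a : {a : DArr Q // dtgt a = j}, cdim k Q 0 i (dsrc a.1) = cdim k Q 1 i j := by
  have h := LinearMap.finrank_range_add_finrank_ker (K := k)
    (V := (a : {a : DArr Q // dtgt a = j}) → ppCorner k Q 0 i (dsrc a.1))
    (V₂ := ppCorner k Q 1 i j) (cornerSum k Q 0 i j)
  rw [ker_cornerSum_zero, finrank_bot, LinearMap.range_eq_top.2 (cornerSum_surjective 0 i j),
    finrank_top, Module.finrank_pi_fintype] at h
  exact h.symm

lemma sum_cdim_succ [FiniteDimensional k (PreprojAlg k Q)] (n : ℕ) (i j : Fin Q.r) :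
    ∑ a : {a : DArr Q // dtgt a = j}, cdim k Q (n + 1) i (dsrc a.1) +
        Module.finrank k (LinearMap.ker (cornerMesh k Q n i j)) =
      cdim k Q (n + 2) i j + cdim k Q n i j := by
  have h := LinearMap.finrank_range_add_finrank_ker (K := k)
    (V := (a : {a : DArr Q // dtgt a = j}) → ppCorner k Q (n + 1) i (dsrc a.1))
    (V₂ := ppCorner k Q (n + 2) i j) (cornerSum k Q (n + 1) i j)
  have h2 := LinearMap.finrank_range_add_finrank_ker (K := k) (V := ppCorner k Q n i j)
    (V₂ := (a : {a : DArr Q // dtgt a = j}) → ppCorner k Q (n + 1) i (dsrc a.1))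
    (cornerMesh k Q n i j)
  rw [ker_cornerSum_succ, LinearMap.range_eq_top.2 (cornerSum_surjective _ i j),
    finrank_top, Module.finrank_pi_fintype] at h
  simp only [cdim]
  rw [← h, ← h2]
  ring

lemma mono_of_wt_zero (i : Fin Q.r) (l : List (PPGen Q)) (hl : wt l = 0) :
    ∃ c : k, ppIdem k Q i * mono k l = c • ppIdem k Q i := by
  induction l using List.reverseRecOn with
  | nil => exact ⟨1, by simp [mono]⟩
  | append_singleton l g ih =>
    rw [wt_concat] at hl
    obtain ⟨c, hc⟩ := ih (by omega)
    rcases gen_cases g with ⟨j, rfl⟩ | ⟨a, rfl⟩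
    · rw [mono_concat, ← mul_assoc, hc]
      change ∃ c' : k, c • ppIdem k Q i * ppIdem k Q j = _
      rcases eq_or_ne i j with rfl | h
      · exact ⟨c, by rw [smul_mul_assoc, idem_mul_self]⟩
      · exact ⟨0, by rw [smul_mul_assoc, idem_mul_of_ne h, smul_zero, zero_smul]⟩
    · simp at hl

lemma idem_mul_of_mem_piece_zero (i : Fin Q.r) {x : PreprojAlg k Q} (hx : x ∈ ppPiece k Q 0) :
    ∃ c : k, ppIdem k Q i * x = c • ppIdem k Q i := by
  induction hx using Submodule.span_induction with
  | mem x hx => obtain ⟨l, hl, rfl⟩ := hx; exact mono_of_wt_zero i l hl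
  | zero => exact ⟨0, by simp⟩
  | add x y _ _ hx hy =>
    obtain ⟨c, hc⟩ := hx
    obtain ⟨d, hd⟩ := hy
    exact ⟨c + d, by rw [mul_add, hc, hd, add_smul]⟩
  | smul c x _ hx =>
    obtain ⟨d, hd⟩ := hx
    exact ⟨c * d, by rw [mul_smul_comm, hd, mul_smul]⟩

lemma cdim_zero (i j : Fin Q.r) : cdim k Q 0 i j = if i = j then 1 else 0 := by
  split_ifs with h
  · subst h
    have : ppCorner k Q 0 i i = Submodule.span k {ppIdem k Q i} := by
      ext x
      rw [mem_corner_iff, Submodule.mem_span_singleton]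
      constructor
      · rintro ⟨h1, h2, -⟩
        obtain ⟨c, hc⟩ := idem_mul_of_mem_piece_zero i h1
        exact ⟨c, by rw [← hc, h2]⟩
      · rintro ⟨c, rfl⟩
        exact ⟨Submodule.smul_mem _ _ (idem_mem_piece i), by rw [mul_smul_comm, idem_mul_self],
          by rw [smul_mul_assoc, idem_mul_self]⟩
    rw [cdim, this, finrank_span_singleton (idem_ne_zero i)]
  · have : ppCorner k Q 0 i j = ⊥ := by
      rw [eq_bot_iff]
      intro x hx
      obtain ⟨h1, h2, h3⟩ := mem_corner_iff.1 hx
      obtain ⟨c, hc⟩ := idem_mul_of_mem_piece_zero i h1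
      rw [Submodule.mem_bot, ← h3, ← h2, hc, smul_mul_assoc, idem_mul_of_ne h, smul_zero]
    rw [cdim, this, finrank_bot]

lemma mem_rowIdeal_iff {i : Fin Q.r} {x : PreprojAlg k Q} :
    x ∈ ppRowIdeal k Q i ↔ ppIdem k Q i * x = x := by
  constructor
  · rintro ⟨y, rfl⟩
    simp [← mul_assoc, idem_mul_self]
  · intro h
    exact ⟨x, by simpa using h⟩

lemma rank_le_mul_rank_rowIdeal (hr : 0 < Q.r) : ∃ i : Fin Q.r,
    Module.rank k (PreprojAlg k Q) ≤ (Q.r : Cardinal) * Module.rank k (ppRowIdeal k Q i) := by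
  have : Nonempty (Fin Q.r) := ⟨⟨0, hr⟩⟩
  obtain ⟨i, hi⟩ := Finite.exists_max fun i : Fin Q.r => Module.rank k (ppRowIdeal k Q i)
  refine ⟨i, ?_⟩
  let f : PreprojAlg k Q →ₗ[k] ((i : Fin Q.r) → ppRowIdeal k Q i) :=
    LinearMap.pi fun i => (LinearMap.mulLeft k (ppIdem k Q i)).rangeRestrict
  have hf : Function.Injective f := by
    intro x y hxy
    rw [← one_mul x, ← one_mul y, ← sum_idem, Finset.sum_mul, Finset.sum_mul]
    exact Finset.sum_congr rfl fun j _ => congrArg Subtype.val (congrFun hxy j)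
  have hfree (i : Fin Q.r) : Module.Free k (ppRowIdeal k Q i) :=
    Module.Free.of_divisionRing k (ppRowIdeal k Q i)
  refine (LinearMap.rank_le_of_injective f hf).trans ?_
  rw [rank_pi]
  refine (Cardinal.sum_le_sum _ (fun _ => Module.rank k (ppRowIdeal k Q i)) hi).trans ?_
  rw [Cardinal.sum_const', Cardinal.mk_fin]

lemma finiteDimensional_of_isNakayamaPerm (hr : 0 < Q.r) {ν : Equiv.Perm (Fin Q.r)}
    (hν : IsNakayamaPerm k Q ν) : FiniteDimensional k (PreprojAlg k Q) := by
  obtain ⟨i, hi⟩ := rank_le_mul_rank_rowIdeal (k := k) hr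
  by_cases h : Module.rank k (ppRowIdeal k Q i) < Cardinal.aleph0
  · exact Module.rank_lt_aleph0_iff.1
      (hi.trans_lt (Cardinal.mul_lt_aleph0 (Cardinal.natCast_lt_aleph0) h))
  · exfalso
    rw [not_lt] at h
    obtain ⟨φ, -⟩ := hν i
    have h1 := rank_lt_rank_dual (K := k) (V := ppRowIdeal k Q i) h
    have h2 := φ.rank_eq
    have h3 := Submodule.rank_le (ppColIdeal k Q (ν i))
    have h4 : (Q.r : Cardinal) * Module.rank k (ppRowIdeal k Q i) ≤
        Module.rank k (ppRowIdeal k Q i) :=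
      (mul_le_mul_left (Cardinal.natCast_lt_aleph0.le.trans h) _).trans
        (Cardinal.mul_eq_self h).le
    exact absurd (h1.trans_le (h2.symm.le.trans (h3.trans (hi.trans h4)))) (lt_irrefl _)

/-- Membership in the right socle of `Π(Q)`. -/
def IsSoc (x : PreprojAlg k Q) : Prop := ∀ b : DArr Q, x * darr k b = 0

lemma IsSoc.mul_idem {x : PreprojAlg k Q} (hx : IsSoc x) (j : Fin Q.r) :
    IsSoc (x * ppIdem k Q j) := by
  intro b
  rw [mul_assoc]
  rcases eq_or_ne j (dsrc b) with rfl | h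
  · rw [idem_mul_darr, hx]
  · rw [idem_mul_darr_of_ne h, mul_zero]

/-- A nondegenerate functional on the right socle of `e_i Π(Q)`, supported at `ν i`. -/
lemma exists_socle_functional {ν : Equiv.Perm (Fin Q.r)} (hν : IsNakayamaPerm k Q ν)
    (i : Fin Q.r) : ∃ f : Module.Dual k (ppRowIdeal k Q i),
      (∀ x : ppRowIdeal k Q i, IsSoc (x : PreprojAlg k Q) → f x = 0 → x = 0) ∧
      ∀ (x : ppRowIdeal k Q i) (j), j ≠ ν i →
        f ⟨x * ppIdem k Q j, mem_ppRowIdeal_mul k Q i _ x.2⟩ = 0 := by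
  obtain ⟨φ, hφ⟩ := hν i
  let e : ppColIdeal k Q (ν i) := ⟨ppIdem k Q (ν i), 1, by simp⟩
  have hne (x : ppRowIdeal k Q i) (j) (hj : j ≠ ν i) :
      φ e ⟨x * ppIdem k Q j, mem_ppRowIdeal_mul k Q i _ x.2⟩ = 0 := by
    rw [← hφ]
    have : (⟨ppIdem k Q j * (e : PreprojAlg k Q), mul_mem_ppColIdeal k Q (ν i) _ e.2⟩ :
        ppColIdeal k Q (ν i)) = 0 := Subtype.ext (idem_mul_of_ne hj)
    rw [this, map_zero, LinearMap.zero_apply]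
  refine ⟨φ e, fun x hs hx => ?_, hne⟩
  have hmono (l : List (PPGen Q)) : ∀ x : ppRowIdeal k Q i, IsSoc (x : PreprojAlg k Q) →
      φ e x = 0 → φ e ⟨x * mono k l, mem_ppRowIdeal_mul k Q i _ x.2⟩ = 0 := by
    induction l with
    | nil =>
      intro x _ hx
      simpa [mono] using hx
    | cons g l ih =>
      intro x hs hx
      have hc : (⟨x * mono k (g :: l), mem_ppRowIdeal_mul k Q i _ x.2⟩ : ppRowIdeal k Q i) =
          ⟨x * ppGen k Q g * mono k l,
            mem_ppRowIdeal_mul k Q i _ (mem_ppRowIdeal_mul k Q i _ x.2)⟩ :=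
        Subtype.ext (by simp [mono, mul_assoc])
      rw [hc]
      rcases gen_cases g with ⟨j, rfl⟩ | ⟨a, rfl⟩
      · refine ih ⟨x * ppIdem k Q j, mem_ppRowIdeal_mul k Q i _ x.2⟩ (hs.mul_idem j) ?_
        rcases eq_or_ne j (ν i) with rfl | hj
        · rw [← hφ]
          have : (⟨ppIdem k Q (ν i) * (e : PreprojAlg k Q),
              mul_mem_ppColIdeal k Q (ν i) _ e.2⟩ : ppColIdeal k Q (ν i)) = e :=
            Subtype.ext (idem_mul_self _)
          rw [this, hx]
        · exact hne x j hj
      · have : (⟨x * ppGen k Q (dgen a) * mono k l,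
            mem_ppRowIdeal_mul k Q i _ (mem_ppRowIdeal_mul k Q i _ x.2)⟩ : ppRowIdeal k Q i) = 0 :=
          Subtype.ext (by
            change x * darr k a * mono k l = 0
            rw [hs, zero_mul])
        rw [this, map_zero]
  have hall (y : PreprojAlg k Q) : φ e ⟨x * y, mem_ppRowIdeal_mul k Q i _ x.2⟩ = 0 := by
    induction y using mono_induction with
    | h1 l => exact hmono l x hs hx
    | h0 =>
      have : (⟨x * 0, mem_ppRowIdeal_mul k Q i _ x.2⟩ : ppRowIdeal k Q i) = 0 :=
        Subtype.ext (mul_zero _)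
      rw [this, map_zero]
    | hadd y z hy hz =>
      have : (⟨x * (y + z), mem_ppRowIdeal_mul k Q i _ x.2⟩ : ppRowIdeal k Q i) =
          ⟨x * y, mem_ppRowIdeal_mul k Q i _ x.2⟩ + ⟨x * z, mem_ppRowIdeal_mul k Q i _ x.2⟩ :=
        Subtype.ext (mul_add _ _ _)
      rw [this, map_add, hy, hz, add_zero]
    | hsmul c y hy =>
      have : (⟨x * (c • y), mem_ppRowIdeal_mul k Q i _ x.2⟩ : ppRowIdeal k Q i) =
          c • ⟨x * y, mem_ppRowIdeal_mul k Q i _ x.2⟩ := Subtype.ext (mul_smul_comm _ _ _)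
      rw [this, map_smul, hy, smul_zero]
  have hfree : Module.Free k (ppRowIdeal k Q i) :=
    Module.Free.of_divisionRing k (ppRowIdeal k Q i)
  have hproj : Module.Projective k (ppRowIdeal k Q i) := Module.Projective.of_free
  rw [← Module.forall_dual_apply_eq_zero_iff k]
  intro f
  obtain ⟨m, rfl⟩ := φ.surjective f
  obtain ⟨y, hy⟩ := m.2
  have : m = ⟨y * (e : PreprojAlg k Q), mul_mem_ppColIdeal k Q (ν i) _ e.2⟩ :=
    Subtype.ext hy.symm
  rw [this, hφ, hall]

lemma exists_piece_eq_bot [FiniteDimensional k (PreprojAlg k Q)] :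
    ∃ N, ∀ n, N ≤ n → ∀ i j, cdim k Q n i j = 0 := by
  have b := Module.finBasis k (PreprojAlg k Q)
  choose N hN using fun i => exists_proj_eq_zero (b i)
  refine ⟨∑ i, N i, fun n hn i j => ?_⟩
  have h0 : proj k Q n = 0 := b.ext fun i =>
    hN i n ((Finset.single_le_sum (fun _ _ => Nat.zero_le _) (Finset.mem_univ i)).trans hn)
  have : ppCorner k Q n i j = ⊥ := by
    rw [eq_bot_iff]
    intro x hx
    have h1 := proj_of_mem (mem_corner_iff.1 hx).1 n
    rw [if_pos rfl, h0] at h1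
    exact h1.symm
  rw [cdim, this, finrank_bot]

lemma cdim_eq_zero_iff [FiniteDimensional k (PreprojAlg k Q)] {n : ℕ} {i j : Fin Q.r} :
    cdim k Q n i j = 0 ↔ ∀ x ∈ ppCorner k Q n i j, x = 0 := by
  rw [cdim, Submodule.finrank_eq_zero, Submodule.eq_bot_iff]

lemma cdim_succ_eq_zero [FiniteDimensional k (PreprojAlg k Q)] {n : ℕ} {i : Fin Q.r}
    (h : ∀ j, cdim k Q n i j = 0) (j : Fin Q.r) : cdim k Q (n + 1) i j = 0 := by
  rw [cdim_eq_zero_iff]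
  intro x hx
  obtain ⟨y, hy⟩ := cornerSum_surjective n i j ⟨x, hx⟩
  have h1 := coe_cornerSum y
  rw [hy] at h1
  refine h1.trans (Finset.sum_eq_zero fun a _ => ?_)
  rw [cdim_eq_zero_iff.1 (h _) _ (y a).2, zero_mul]

lemma exists_topDegree [FiniteDimensional k (PreprojAlg k Q)] (i : Fin Q.r) :
    ∃ d, ∀ n, (∃ j, cdim k Q n i j ≠ 0) ↔ n ≤ d := by
  classical
  have hex : ∃ N, ∀ j, cdim k Q N i j = 0 := by
    obtain ⟨N, hN⟩ := exists_piece_eq_bot (k := k) (Q := Q)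
    exact ⟨N, hN N le_rfl i⟩
  have h0 : Nat.find hex ≠ 0 := by
    intro h
    have := Nat.find_spec hex i
    rw [h, cdim_zero, if_pos rfl] at this
    exact one_ne_zero this
  refine ⟨Nat.find hex - 1, fun n => ⟨fun ⟨j, hj⟩ => ?_, fun hn => ?_⟩⟩
  · by_contra hlt
    refine hj ?_
    have : ∀ m, Nat.find hex ≤ m → ∀ j, cdim k Q m i j = 0 := by
      intro m hm
      induction m, hm using Nat.le_induction with
      | base => exact Nat.find_spec hex
      | succ m _ ih => exact cdim_succ_eq_zero ih
    exact this n (by omega) j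
  · have := Nat.find_min hex (m := n) (by omega)
    push Not at this
    exact this

lemma isSoc_of_mem_ker {n : ℕ} {i j : Fin Q.r} {x : ppCorner k Q n i j}
    (hx : x ∈ LinearMap.ker (cornerMesh k Q n i j)) : IsSoc (x : PreprojAlg k Q) := by
  intro b
  rcases eq_or_ne j (dsrc b) with h | h
  · have h1 := coe_cornerMesh x ⟨b.swap, by rw [dtgt_swap, h]⟩
    rw [LinearMap.mem_ker.1 hx] at h1
    have h2 := congrArg (dsgn k b.swap • ·) h1
    simp only [Sum.swap_swap, smul_smul, dsgn_mul_self, one_smul] at h2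
    rw [← h2]
    exact smul_zero _
  · rw [← (mem_corner_iff.1 x.2).2.2, mul_assoc, idem_mul_darr_of_ne h, mul_zero]

lemma mem_ker_of_isSoc {n : ℕ} {i j : Fin Q.r} {x : ppCorner k Q n i j}
    (hx : IsSoc (x : PreprojAlg k Q)) : x ∈ LinearMap.ker (cornerMesh k Q n i j) := by
  rw [LinearMap.mem_ker]
  ext a
  rw [coe_cornerMesh, hx, smul_zero]
  rfl

theorem exists_socle_degrees [FiniteDimensional k (PreprojAlg k Q)] {ν : Equiv.Perm (Fin Q.r)}
    (hν : IsNakayamaPerm k Q ν) : ∃ d : Fin Q.r → ℕ,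
      (∀ i n, (∃ j, cdim k Q n i j ≠ 0) ↔ n ≤ d i) ∧
      ∀ n i j, Module.finrank k (LinearMap.ker (cornerMesh k Q n i j)) =
        if n = d i ∧ ν i = j then 1 else 0 := by
  choose d hd using exists_topDegree (k := k) (Q := Q)
  refine ⟨d, hd, fun n i j => ?_⟩
  obtain ⟨f, hf, hfν⟩ := exists_socle_functional hν i
  have hrow {n j} {x : PreprojAlg k Q} (hx : x ∈ ppCorner k Q n i j) : x ∈ ppRowIdeal k Q i :=
    mem_rowIdeal_iff.2 (mem_corner_iff.1 hx).2.1
  have hsupp {n j} {x : PreprojAlg k Q} (hx : x ∈ ppCorner k Q n i j) (hs : IsSoc x)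
      (hj : ν i ≠ j) : x = 0 := by
    have h1 := hfν ⟨x, hrow hx⟩ j hj.symm
    simp only [(mem_corner_iff.1 hx).2.2] at h1
    exact congrArg Subtype.val (hf ⟨x, hrow hx⟩ hs h1)
  obtain ⟨j', hj'⟩ := (hd i (d i)).2 le_rfl
  obtain ⟨y, hy, hy0⟩ : ∃ y ∈ ppCorner k Q (d i) i j', y ≠ 0 := by
    rw [ne_eq, cdim_eq_zero_iff] at hj'
    push Not at hj'
    exact hj'
  have hys : IsSoc y := by
    intro b
    rcases eq_or_ne j' (dsrc b) with h | h
    · subst h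
      have h1 := corner_mul_darr hy
      have h2 : cdim k Q (d i + 1) i (dtgt b) = 0 := by
        by_contra hne
        exact absurd ((hd i (d i + 1)).1 ⟨_, hne⟩) (by omega)
      exact cdim_eq_zero_iff.1 h2 _ h1
    · rw [← (mem_corner_iff.1 hy).2.2, mul_assoc, idem_mul_darr_of_ne h, mul_zero]
  have hjν : ν i = j' := by
    by_contra h
    exact hy0 (hsupp hy hys h)
  subst hjν
  have hfy : f ⟨y, hrow hy⟩ ≠ 0 := fun h => hy0 (congrArg Subtype.val (hf ⟨y, hrow hy⟩ hys h))
  have hprop {n j} {x : PreprojAlg k Q} (hx : x ∈ ppCorner k Q n i j) (hs : IsSoc x) :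
      ∃ c : k, c • y = x := by
    refine ⟨f ⟨x, hrow hx⟩ / f ⟨y, hrow hy⟩, ?_⟩
    have h1 := hf (⟨x, hrow hx⟩ + (-(f ⟨x, hrow hx⟩ / f ⟨y, hrow hy⟩)) • ⟨y, hrow hy⟩) (by
      intro b
      change (x + _ • y) * _ = 0
      rw [add_mul, smul_mul_assoc, hs, hys, smul_zero, add_zero]) (by
      rw [map_add, map_smul, smul_eq_mul, neg_mul, div_mul_cancel₀ _ hfy, add_neg_cancel])
    have h2 : x + (-(f ⟨x, hrow hx⟩ / f ⟨y, hrow hy⟩)) • y = 0 := congrArg Subtype.val h1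
    rw [← zero_add ((f ⟨x, hrow hx⟩ / f ⟨y, hrow hy⟩) • y), ← h2, add_assoc, ← add_smul,
      neg_add_cancel, zero_smul, add_zero]
  rw [← Submodule.finrank_map_subtype_eq]
  split_ifs with h
  · obtain ⟨rfl, rfl⟩ := h
    have : Submodule.map (ppCorner k Q (d i) i (ν i)).subtype
        (LinearMap.ker (cornerMesh k Q (d i) i (ν i))) = Submodule.span k {y} := by
      ext x
      rw [Submodule.mem_span_singleton]
      constructor
      · rintro ⟨x, hx, rfl⟩
        exact hprop x.2 (isSoc_of_mem_ker hx)
      · rintro ⟨c, rfl⟩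
        exact ⟨⟨c • y, Submodule.smul_mem _ c hy⟩, mem_ker_of_isSoc fun b => by
          rw [smul_mul_assoc, hys, smul_zero], rfl⟩
    rw [this, finrank_span_singleton hy0]
  · rw [Submodule.finrank_eq_zero, Submodule.eq_bot_iff]
    rintro _ ⟨x, hx, rfl⟩
    have hs := isSoc_of_mem_ker hx
    by_cases hj : ν i = j
    · have hn : d i ≠ n := fun h' => h ⟨h'.symm, hj⟩
      obtain ⟨c, hc⟩ := hprop x.2 hs
      have h1 := proj_of_mem (mem_corner_iff.1 x.2).1 n
      rw [if_pos rfl, ← hc, map_smul, proj_of_mem (mem_corner_iff.1 hy).1 n, if_neg hn,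
        smul_zero] at h1
      rw [Submodule.subtype_apply, ← hc, ← h1]
    · exact hsupp x.2 hs hj

open Matrix

section Chebyshev

variable {ι : Type*} [Fintype ι] [DecidableEq ι]

/-- The Chebyshev-type recursion `V₀ = 0`, `V₁ = 1`, `Vₙ₊₂ = Vₙ₊₁ C - Vₙ`. -/
def cheb (C : Matrix ι ι ℤ) : ℕ → Matrix ι ι ℤ
  | 0 => 0
  | 1 => 1
  | n + 2 => cheb C (n + 1) * C - cheb C n

lemma cheb_add_two (C : Matrix ι ι ℤ) (n : ℕ) :
    cheb C (n + 2) = cheb C (n + 1) * C - cheb C n := by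
  rw [cheb]

lemma cheb_commute (C : Matrix ι ι ℤ) (n : ℕ) : Commute (cheb C n) C := by
  induction n using Nat.twoStepInduction with
  | zero => exact Commute.zero_left C
  | one => exact Commute.one_left C
  | more n h1 h2 =>
    rw [cheb_add_two]
    exact (h2.mul_left (Commute.refl C)).sub_left h1

lemma cheb_add_two' (C : Matrix ι ι ℤ) (n : ℕ) :
    cheb C (n + 2) = C * cheb C (n + 1) - cheb C n := by
  rw [cheb_add_two, (cheb_commute C _).eq]

lemma cheb_transpose {C : Matrix ι ι ℤ} (hC : Cᵀ = C) (n : ℕ) : (cheb C n)ᵀ = cheb C n := by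
  induction n using Nat.twoStepInduction with
  | zero => simp [cheb]
  | one => simp [cheb]
  | more n h1 h2 =>
    rw [cheb_add_two, transpose_sub, transpose_mul, h1, h2, hC, (cheb_commute C _).eq]

variable {C : Matrix ι ι ℤ} {H : ℕ → Matrix ι ι ℤ} {d : ι → ℕ} {ν : Equiv.Perm ι}

lemma cheb_succ_apply (h0 : H 0 = 1) (h1 : H 1 = C)
    (hrec : ∀ n i j, H (n + 2) i j + H n i j =
      (H (n + 1) * C) i j + if n = d i ∧ ν i = j then 1 else 0)
    (n : ℕ) (i j : ι) (hn : n ≤ d i + 1) : cheb C (n + 1) i j = H n i j := by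
  induction n using Nat.twoStepInduction generalizing j with
  | zero => simp [cheb, h0]
  | one => simp [cheb, h1]
  | more n ih1 ih2 =>
    have h := hrec n i j
    rw [if_neg (by omega), add_zero] at h
    rw [cheb_add_two, Matrix.sub_apply, ih1 _ (by omega), eq_sub_of_add_eq h]
    congr 1
    simp only [mul_apply]
    exact Finset.sum_congr rfl fun l _ => by rw [ih2 _ (by omega)]

theorem exists_constant_socle_degree [Nonempty ι] (hC0 : ∀ i j, 0 ≤ C i j)
    (hconn : ∀ i j, Relation.ReflTransGen (fun a b => C a b ≠ 0) i j)
    (h0 : H 0 = 1) (h1 : H 1 = C)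
    (hrec : ∀ n i j, H (n + 2) i j + H n i j =
      (H (n + 1) * C) i j + if n = d i ∧ ν i = j then 1 else 0)
    (hH : ∀ n i j, 0 ≤ H n i j) (hd : ∀ i n, (∃ j, H n i j ≠ 0) ↔ n ≤ d i) :
    ∃ D, ∀ i, d i = D := by
  obtain ⟨i₀, hi₀⟩ := Finite.exists_min d
  have hrow (l j : ι) : cheb C (d i₀ + 2) l j = H (d i₀ + 1) l j :=
    cheb_succ_apply h0 h1 hrec _ _ _ (by have := hi₀ l; omega)
  have hzero {l : ι} (hl : d l = d i₀) (j : ι) : H (d i₀ + 1) l j = 0 := by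
    by_contra h
    have := (hd l _).1 ⟨j, h⟩
    omega
  refine ⟨d i₀, fun j => ?_⟩
  induction hconn i₀ j with
  | refl => rfl
  | @tail a b _ hab ih =>
    refine le_antisymm ?_ (hi₀ b)
    by_contra hlt
    obtain ⟨j, hj⟩ := (hd b (d i₀ + 1)).2 (by omega)
    have h2 : (C * cheb C (d i₀ + 2)) a j = 0 := by
      rw [← (cheb_commute C _).eq, mul_apply]
      exact Finset.sum_eq_zero fun l _ => by rw [hrow, hzero ih, zero_mul]
    rw [mul_apply, Finset.sum_eq_zero_iff_of_nonneg fun l _ =>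
      mul_nonneg (hC0 _ _) (by rw [hrow]; exact hH _ _ _)] at h2
    have h3 := h2 b (Finset.mem_univ b)
    rw [hrow] at h3
    exact (mul_ne_zero hab hj) h3

end Chebyshev

lemma doubleAdj_eq_sum (Q : FinQuiver) (i j : Fin Q.r) :
    Q.doubleAdj i j = ∑ e : Q.Arrow, ((if Q.src e = i ∧ Q.tgt e = j then 1 else 0) +
      if Q.src e = j ∧ Q.tgt e = i then 1 else 0) := by
  simp [FinQuiver.doubleAdj, FinQuiver.adjMatrix, Finset.sum_add_distrib, Fintype.card_subtype]

lemma doubleAdj_comm (Q : FinQuiver) (i j : Fin Q.r) : Q.doubleAdj i j = Q.doubleAdj j i := by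
  simp [FinQuiver.doubleAdj, add_comm]

lemma sum_dsrc_eq (g : Fin Q.r → ℕ) (j : Fin Q.r) :
    ∑ a : {a : DArr Q // dtgt a = j}, g (dsrc a.1) = ∑ l, g l * Q.doubleAdj l j := by
  rw [← Finset.sum_subtype (Finset.univ.filter fun a : DArr Q => dtgt a = j) (by simp)
    (fun a => g (dsrc a)), Finset.sum_filter]
  simp only [doubleAdj_eq_sum, Finset.mul_sum]
  rw [Finset.sum_comm]
  refine (Fintype.sum_sum_type _).trans ?_
  rw [← Finset.sum_add_distrib]
  refine Finset.sum_congr rfl fun e _ => ?_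
  simp only [mul_add, Finset.sum_add_distrib, mul_ite, mul_one, mul_zero, ite_and,
    Finset.sum_ite_eq, Finset.mem_univ, if_true]
  congr 1
  change (if Q.src e = j then g (Q.tgt e) else 0) = _
  split_ifs <;> simp

/-- The integral adjacency matrix of the double quiver. -/
def adjZ (Q : FinQuiver) : Matrix (Fin Q.r) (Fin Q.r) ℤ := Q.doubleAdj.map Nat.cast

lemma adjZ_transpose (Q : FinQuiver) : (adjZ Q)ᵀ = adjZ Q := by
  ext i j
  simp [adjZ, doubleAdj_comm Q i j]

/-- The matrix of dimensions of the corners of `Π(Q)_n`. -/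
noncomputable def dimZ (k : Type) [Field k] (Q : FinQuiver) (n : ℕ) :
    Matrix (Fin Q.r) (Fin Q.r) ℤ :=
  Matrix.of fun i j => (cdim k Q n i j : ℤ)

lemma dimZ_zero : dimZ k Q 0 = 1 := by
  ext i j
  simp [dimZ, cdim_zero, one_apply]

lemma dimZ_one [FiniteDimensional k (PreprojAlg k Q)] : dimZ k Q 1 = adjZ Q := by
  ext i j
  have h := sum_cdim_zero (k := k) i j
  rw [sum_dsrc_eq fun l => cdim k Q 0 i l] at h
  simp [dimZ, adjZ, ← h, cdim_zero]

lemma dimZ_add_two [FiniteDimensional k (PreprojAlg k Q)] (n : ℕ) (i j : Fin Q.r) :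
    dimZ k Q (n + 2) i j + dimZ k Q n i j = (dimZ k Q (n + 1) * adjZ Q) i j +
      (Module.finrank k (LinearMap.ker (cornerMesh k Q n i j)) : ℤ) := by
  have h := sum_cdim_succ (k := k) n i j
  rw [sum_dsrc_eq] at h
  simp only [dimZ, adjZ, of_apply, mul_apply, map_apply]
  exact_mod_cast h.symm

lemma adjZ_connected (hconn : Q.Connected) (i j : Fin Q.r) :
    Relation.ReflTransGen (fun a b => adjZ Q a b ≠ 0) i j := by
  induction hconn i j with
  | refl => exact .refl
  | @tail a b _ he ih =>
    obtain ⟨e, he⟩ := he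
    refine ih.tail ?_
    have : 0 < Q.doubleAdj a b := by
      rw [doubleAdj_eq_sum]
      refine Finset.sum_pos' (fun _ _ => Nat.zero_le _) ⟨e, Finset.mem_univ e, ?_⟩
      rcases he with he | he <;> simp [he]
    simpa [adjZ] using this.ne'

/-- The top degree is the same for all vertices, and `Vₙ` recovers the dimensions up to there. -/
theorem exists_topDegree_const (hr : 0 < Q.r) (hconn : Q.Connected)
    {ν : Equiv.Perm (Fin Q.r)} (hν : IsNakayamaPerm k Q ν) : ∃ D : ℕ,
      (∀ n i j, dimZ k Q (n + 2) i j + dimZ k Q n i j = (dimZ k Q (n + 1) * adjZ Q) i j +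
        if n = D ∧ ν i = j then 1 else 0) ∧
      cheb (adjZ Q) (D + 2) = 0 ∧ (∀ n ≤ D, ∀ i j, 0 ≤ cheb (adjZ Q) (n + 1) i j) ∧
      ∀ n ≤ D, ∀ j, ∃ i, cheb (adjZ Q) (n + 1) i j ≠ 0 := by
  have := finiteDimensional_of_isNakayamaPerm hr hν
  obtain ⟨d, hd, hker⟩ := exists_socle_degrees hν
  have : Nonempty (Fin Q.r) := ⟨⟨0, hr⟩⟩
  have hrec (n : ℕ) (i j : Fin Q.r) : dimZ k Q (n + 2) i j + dimZ k Q n i j =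
      (dimZ k Q (n + 1) * adjZ Q) i j + if n = d i ∧ ν i = j then 1 else 0 := by
    rw [dimZ_add_two, hker]
    push_cast
    rfl
  have hd' (i : Fin Q.r) (n : ℕ) : (∃ j, dimZ k Q n i j ≠ 0) ↔ n ≤ d i := by
    rw [← hd]
    simp [dimZ]
  have hpos (n : ℕ) (i j : Fin Q.r) : 0 ≤ dimZ k Q n i j := by simp [dimZ]
  obtain ⟨D, hD⟩ := exists_constant_socle_degree (C := adjZ Q) (fun i j => by simp [adjZ])
    (adjZ_connected hconn) dimZ_zero dimZ_one hrec hpos hd'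
  have hcheb := cheb_succ_apply dimZ_zero dimZ_one hrec
  simp only [hD] at hrec hd' hcheb
  refine ⟨D, hrec, ?_, fun n hn i j => ?_, fun n hn j => ?_⟩
  · ext i j
    rw [hcheb _ _ _ le_rfl]
    by_contra h
    have := (hd' i _).1 ⟨j, h⟩
    omega
  · rw [hcheb _ _ _ (by omega)]
    exact hpos n i j
  · obtain ⟨i, hi⟩ := (hd' j n).2 hn
    refine ⟨i, ?_⟩
    rw [← cheb_transpose (adjZ_transpose Q), transpose_apply, hcheb _ _ _ (by omega)]
    exact hi

section TitsForm

lemma one_le_titsFormZ (hQ : Q.IsDynkin) {x : Fin Q.r → ℤ} (hx : x ≠ 0) :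
    1 ≤ Q.titsFormZ x := by
  have h : (fun i => (x i : ℝ)) ≠ 0 := fun h =>
    hx (funext fun i => by simpa using congrFun h i)
  have h1 := hQ _ h
  have h2 : Q.titsForm (fun i => (x i : ℝ)) = (Q.titsFormZ x : ℝ) := by
    simp [FinQuiver.titsForm, FinQuiver.titsFormZ]
  rw [h2] at h1
  exact_mod_cast h1

lemma titsFormZ_neg (x : Fin Q.r → ℤ) : Q.titsFormZ (-x) = Q.titsFormZ x := by
  simp [FinQuiver.titsFormZ]

lemma titsFormZ_posPart_add_negPart_le (x : Fin Q.r → ℤ) :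
    Q.titsFormZ x⁺ + Q.titsFormZ x⁻ ≤ Q.titsFormZ x := by
  have h1 (i : Fin Q.r) : x i ^ 2 = (x⁺ i) ^ 2 + (x⁻ i) ^ 2 := by
    rcases le_total 0 (x i) with h | h <;> simp [Pi.posPart_apply, Pi.negPart_apply, h]
  have h2 (i : Fin Q.r) : x i = x⁺ i - x⁻ i := by
    rw [← Pi.sub_apply, posPart_sub_negPart]
  have hp (i : Fin Q.r) : 0 ≤ x⁺ i := posPart_nonneg (x i)
  have hn (i : Fin Q.r) : 0 ≤ x⁻ i := negPart_nonneg (x i)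
  have h3 : ∑ e : Q.Arrow, x (Q.src e) * x (Q.tgt e) ≤
      ∑ e : Q.Arrow, (x⁺ (Q.src e) * x⁺ (Q.tgt e) + x⁻ (Q.src e) * x⁻ (Q.tgt e)) := by
    refine Finset.sum_le_sum fun e _ => ?_
    rw [h2 (Q.src e), h2 (Q.tgt e)]
    nlinarith [mul_nonneg (hp (Q.src e)) (hn (Q.tgt e)), mul_nonneg (hn (Q.src e)) (hp (Q.tgt e))]
  simp only [FinQuiver.titsFormZ]
  rw [Finset.sum_congr rfl fun i _ => h1 i]
  rw [Finset.sum_add_distrib] at h3 ⊢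
  linarith

lemma nonneg_or_nonpos_of_titsFormZ_eq_one (hQ : Q.IsDynkin) {x : Fin Q.r → ℤ}
    (hx : Q.titsFormZ x = 1) : 0 ≤ x ∨ x ≤ 0 := by
  have h := titsFormZ_posPart_add_negPart_le x
  by_cases hp : x⁺ = 0
  · exact Or.inr (posPart_eq_zero.1 hp)
  by_cases hn : x⁻ = 0
  · exact Or.inl (negPart_eq_zero.1 hn)
  have := one_le_titsFormZ hQ hp
  have := one_le_titsFormZ hQ hn
  omega

end TitsForm

section Bipartite

lemma src_ne_tgt (hQ : Q.Acyclic) (e : Q.Arrow) : Q.src e ≠ Q.tgt e := fun h =>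
  hQ (Q.src e) (.single ⟨e, rfl, h.symm⟩)

lemma card_arrow_lt (hr : 0 < Q.r) (hQ : Q.IsDynkin) : Fintype.card Q.Arrow + 1 ≤ Q.r := by
  have h := one_le_titsFormZ hQ (x := fun _ => 1) fun h => by
    simpa using congrFun h ⟨0, hr⟩
  simp [FinQuiver.titsFormZ] at h
  omega

/-- The underlying graph of a Dynkin quiver is a tree, hence bipartite. -/
theorem exists_bicoloring (hr : 0 < Q.r) (hconn : Q.Connected) (hacyc : Q.Acyclic)
    (hQ : Q.IsDynkin) : ∃ κ : Fin Q.r → Bool, ∀ e, κ (Q.tgt e) = !κ (Q.src e) := by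
  classical
  let G : SimpleGraph (Fin Q.r) :=
    SimpleGraph.fromRel fun a b => ∃ e : Q.Arrow, Q.src e = a ∧ Q.tgt e = b
  have hadj (e : Q.Arrow) : G.Adj (Q.src e) (Q.tgt e) :=
    ⟨src_ne_tgt hacyc e, Or.inl ⟨e, rfl, rfl⟩⟩
  have : Nonempty (Fin Q.r) := ⟨⟨0, hr⟩⟩
  have hG : G.Connected := by
    refine ⟨fun i j => ?_⟩
    induction hconn i j with
    | refl => exact .refl _
    | tail _ he ih =>
      obtain ⟨e, ⟨rfl, rfl⟩ | ⟨rfl, rfl⟩⟩ := he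
      · exact ih.trans (hadj e).reachable
      · exact ih.trans (hadj e).symm.reachable
  have hcard : Nat.card G.edgeSet ≤ Fintype.card Q.Arrow := by
    rw [← Nat.card_eq_fintype_card]
    refine Nat.card_le_card_of_surjective
      (fun e : Q.Arrow => (⟨s(Q.src e, Q.tgt e), hadj e⟩ : G.edgeSet)) ?_
    rintro ⟨e, he⟩
    induction e with
    | _ a b =>
      obtain ⟨-, ⟨e, h1, h2⟩ | ⟨e, h1, h2⟩⟩ := he
      · exact ⟨e, Subtype.ext (congrArg₂ (fun a b => s(a, b)) h1 h2)⟩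
      · exact ⟨e, Subtype.ext ((congrArg₂ (fun a b => s(a, b)) h1 h2).trans Sym2.eq_swap)⟩
  have h1 := hG.card_vert_le_card_edgeSet_add_one
  have h2 := card_arrow_lt hr hQ
  have htree : G.IsTree := SimpleGraph.isTree_iff_connected_and_card.2 ⟨hG, by
    rw [Nat.card_fin] at *
    omega⟩
  obtain ⟨c⟩ := htree.isBipartite
  refine ⟨fun i => decide (c i = 0), fun e => ?_⟩
  have h := c.valid (hadj e)
  change decide (c (Q.tgt e) = 0) = !decide (c (Q.src e) = 0)
  generalize c (Q.src e) = p at h ⊢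
  generalize c (Q.tgt e) = q at h ⊢
  revert p q
  decide

end Bipartite

/-- The quadratic form on pairs that is preserved by `(x, y) ↦ (y, Cy - x)`. -/
def pairForm (Q : FinQuiver) (x y : Fin Q.r → ℤ) : ℤ :=
  x ⬝ᵥ x + y ⬝ᵥ y - x ⬝ᵥ (adjZ Q *ᵥ y)

lemma dotProduct_adjZ_mulVec_comm (x y : Fin Q.r → ℤ) :
    x ⬝ᵥ (adjZ Q *ᵥ y) = y ⬝ᵥ (adjZ Q *ᵥ x) := by
  rw [dotProduct_mulVec, ← mulVec_transpose, adjZ_transpose, dotProduct_comm]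

lemma pairForm_shift (x y : Fin Q.r → ℤ) :
    pairForm Q y (adjZ Q *ᵥ y - x) = pairForm Q x y := by
  have h := dotProduct_adjZ_mulVec_comm (Q := Q) y x
  have h2 := dotProduct_adjZ_mulVec_comm (Q := Q) y (adjZ Q *ᵥ y)
  have h3 := dotProduct_comm x (adjZ Q *ᵥ y)
  simp only [pairForm, dotProduct_sub, sub_dotProduct, mulVec_sub]
  linarith

lemma pairForm_comm (x y : Fin Q.r → ℤ) : pairForm Q x y = pairForm Q y x := by
  rw [pairForm, pairForm, dotProduct_adjZ_mulVec_comm]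
  ring

lemma dotProduct_adjZ_mulVec (x y : Fin Q.r → ℤ) :
    x ⬝ᵥ (adjZ Q *ᵥ y) =
      ∑ e : Q.Arrow, (x (Q.src e) * y (Q.tgt e) + x (Q.tgt e) * y (Q.src e)) := by
  simp only [dotProduct, mulVec, adjZ, map_apply, doubleAdj_eq_sum]
  push_cast
  simp only [Finset.sum_mul, Finset.mul_sum]
  have (i : Fin Q.r) : (∑ j, ∑ e : Q.Arrow, x i *
      (((if Q.src e = i ∧ Q.tgt e = j then 1 else 0) +
        if Q.src e = j ∧ Q.tgt e = i then 1 else 0) * y j)) =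
      ∑ e : Q.Arrow, ((if Q.src e = i then x i * y (Q.tgt e) else 0) +
        if Q.tgt e = i then x i * y (Q.src e) else 0) := by
    rw [Finset.sum_comm]
    refine Finset.sum_congr rfl fun e _ => ?_
    simp only [add_mul, mul_add, Finset.sum_add_distrib, ite_and, ite_mul, one_mul, zero_mul,
      mul_ite, mul_zero, Finset.sum_ite_eq, Finset.mem_univ, if_true]
    congr 1
    split_ifs <;> simp
  rw [Finset.sum_congr rfl fun i _ => this i, Finset.sum_comm]
  refine Finset.sum_congr rfl fun e _ => ?_
  simp [Finset.sum_add_distrib]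

/-- The vector agreeing with `x` or `y` according to the colour of the vertex. -/
def colorMix (κ : Fin Q.r → Bool) (x y : Fin Q.r → ℤ) : Fin Q.r → ℤ :=
  fun i => if κ i then x i else y i

lemma colorMix_colorMix (κ : Fin Q.r → Bool) (x y : Fin Q.r → ℤ) :
    colorMix κ (colorMix κ x y) (colorMix κ y x) = x := by
  ext i
  simp only [colorMix]
  split_ifs <;> rfl

lemma colorMix_nonneg (κ : Fin Q.r → Bool) {x y : Fin Q.r → ℤ} (hx : 0 ≤ x) (hy : 0 ≤ y) :
    0 ≤ colorMix κ x y := by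
  intro i
  simp only [colorMix]
  split_ifs
  exacts [hx i, hy i]

lemma colorMix_nonpos (κ : Fin Q.r → Bool) {x y : Fin Q.r → ℤ} (hx : x ≤ 0) (hy : y ≤ 0) :
    colorMix κ x y ≤ 0 := by
  intro i
  simp only [colorMix]
  split_ifs
  exacts [hx i, hy i]

lemma pairForm_eq {κ : Fin Q.r → Bool} (hκ : ∀ e, κ (Q.tgt e) = !κ (Q.src e))
    (x y : Fin Q.r → ℤ) :
    pairForm Q x y = Q.titsFormZ (colorMix κ x y) + Q.titsFormZ (colorMix κ y x) := by
  have h1 : x ⬝ᵥ x + y ⬝ᵥ y = ∑ i, colorMix κ x y i ^ 2 + ∑ i, colorMix κ y x i ^ 2 := by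
    simp only [dotProduct, ← Finset.sum_add_distrib, colorMix]
    refine Finset.sum_congr rfl fun i _ => ?_
    split_ifs <;> ring
  have h2 : x ⬝ᵥ (adjZ Q *ᵥ y) =
      ∑ e : Q.Arrow, colorMix κ x y (Q.src e) * colorMix κ x y (Q.tgt e) +
        ∑ e : Q.Arrow, colorMix κ y x (Q.src e) * colorMix κ y x (Q.tgt e) := by
    rw [dotProduct_adjZ_mulVec, ← Finset.sum_add_distrib]
    refine Finset.sum_congr rfl fun e _ => ?_
    simp only [colorMix, hκ]
    cases κ (Q.src e) <;> simp <;> ring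
  rw [pairForm, h1, h2, FinQuiver.titsFormZ, FinQuiver.titsFormZ]
  ring

lemma eq_zero_or_of_titsFormZ_add_eq_one (hQ : Q.IsDynkin) {u v : Fin Q.r → ℤ}
    (h : Q.titsFormZ u + Q.titsFormZ v = 1) : u = 0 ∨ v = 0 := by
  by_contra! hne
  have := one_le_titsFormZ hQ hne.1
  have := one_le_titsFormZ hQ hne.2
  omega

lemma titsFormZ_sub_eq_one (hQ : Q.IsDynkin) {u v : Fin Q.r → ℤ}
    (h : Q.titsFormZ u + Q.titsFormZ v = 1) : Q.titsFormZ (u - v) = 1 := by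
  have h0 : Q.titsFormZ 0 = 0 := by simp [FinQuiver.titsFormZ]
  rcases eq_zero_or_of_titsFormZ_add_eq_one hQ h with rfl | rfl
  · rwa [zero_sub, titsFormZ_neg, ← zero_add (Q.titsFormZ v), ← h0]
  · rwa [sub_zero, ← add_zero (Q.titsFormZ u), ← h0]

lemma titsFormZ_posPart_add_negPart (hQ : Q.IsDynkin) {w : Fin Q.r → ℤ}
    (h : Q.titsFormZ w = 1) : Q.titsFormZ w⁺ + Q.titsFormZ w⁻ = 1 := by
  have h0 : Q.titsFormZ 0 = 0 := by simp [FinQuiver.titsFormZ]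
  rcases nonneg_or_nonpos_of_titsFormZ_eq_one hQ h with hw | hw
  · rw [posPart_of_nonneg hw, negPart_of_nonneg hw, h0, h, add_zero]
  · rw [posPart_of_nonpos hw, negPart_of_nonpos hw, h0, titsFormZ_neg, h, zero_add]

lemma parts_sub_eq {u v : Fin Q.r → ℤ} (hu : 0 ≤ u) (hv : 0 ≤ v) (h : u = 0 ∨ v = 0) :
    (u - v)⁺ = u ∧ (u - v)⁻ = v := by
  rcases h with rfl | rfl
  · rw [zero_sub, posPart_neg, negPart_neg, posPart_of_nonneg hv, negPart_of_nonneg hv]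
    exact ⟨rfl, rfl⟩
  · rw [sub_zero, posPart_of_nonneg hu, negPart_of_nonneg hu]
    exact ⟨rfl, rfl⟩

lemma pair_nonneg_or_nonpos (hQ : Q.IsDynkin) {κ : Fin Q.r → Bool}
    (hκ : ∀ e, κ (Q.tgt e) = !κ (Q.src e)) {x y : Fin Q.r → ℤ} (h : pairForm Q x y = 1) :
    (0 ≤ x ∧ 0 ≤ y) ∨ (x ≤ 0 ∧ y ≤ 0) := by
  rw [pairForm_eq hκ] at h
  have h0 : Q.titsFormZ 0 = 0 := by simp [FinQuiver.titsFormZ]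
  have key : (0 ≤ colorMix κ x y ∧ 0 ≤ colorMix κ y x) ∨
      (colorMix κ x y ≤ 0 ∧ colorMix κ y x ≤ 0) := by
    generalize colorMix κ x y = u at *
    generalize colorMix κ y x = v at *
    rcases eq_zero_or_of_titsFormZ_add_eq_one hQ h with rfl | rfl
    · rw [h0, zero_add] at h
      simpa using nonneg_or_nonpos_of_titsFormZ_eq_one hQ h
    · rw [h0, add_zero] at h
      simpa using nonneg_or_nonpos_of_titsFormZ_eq_one hQ h
  have hx := colorMix_colorMix κ x y
  have hy := colorMix_colorMix κ y x
  exact key.imp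
    (fun h => ⟨(colorMix_nonneg κ h.1 h.2).trans_eq hx, (colorMix_nonneg κ h.2 h.1).trans_eq hy⟩)
    fun h => ⟨hx.symm.trans_le (colorMix_nonpos κ h.1 h.2),
      hy.symm.trans_le (colorMix_nonpos κ h.2 h.1)⟩

/-- The sequence with `f₀ = y`, `f₁ = x` and `fₙ₊₂ = C fₙ₊₁ - fₙ`. -/
def orbit (Q : FinQuiver) (y x : Fin Q.r → ℤ) : ℕ → Fin Q.r → ℤ
  | 0 => y
  | 1 => x
  | n + 2 => adjZ Q *ᵥ orbit Q y x (n + 1) - orbit Q y x n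

lemma orbit_add_two (y x : Fin Q.r → ℤ) (n : ℕ) :
    orbit Q y x (n + 2) = adjZ Q *ᵥ orbit Q y x (n + 1) - orbit Q y x n := by
  rw [orbit]

lemma orbit_succ_eq (y x : Fin Q.r → ℤ) (n : ℕ) :
    orbit Q y x (n + 1) = cheb (adjZ Q) (n + 1) *ᵥ x - cheb (adjZ Q) n *ᵥ y := by
  induction n using Nat.twoStepInduction with
  | zero => simp [orbit, cheb]
  | one => simp [orbit, cheb]
  | more n h1 h2 =>
    rw [orbit_add_two, h1, h2, cheb_add_two' _ (n + 1), cheb_add_two' _ n]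
    simp only [mulVec_sub, sub_mulVec, mulVec_mulVec, Matrix.mul_sub]
    abel

lemma pairForm_orbit (y x : Fin Q.r → ℤ) (n : ℕ) :
    pairForm Q (orbit Q y x n) (orbit Q y x (n + 1)) = pairForm Q y x := by
  induction n with
  | zero => rfl
  | succ n ih => rw [orbit_add_two, pairForm_shift, ih]

lemma orbit_reverse (y x : Fin Q.r → ℤ) (N s n : ℕ) (h : n + s = N + 1) :
    orbit Q (orbit Q y x (N + 1)) (orbit Q y x N) s = orbit Q y x n := by
  induction s using Nat.twoStepInduction generalizing n with
  | zero =>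
    obtain rfl : n = N + 1 := h
    rfl
  | one =>
    obtain rfl : n = N := by omega
    rfl
  | more s h1 h2 =>
    rw [orbit_add_two, h1 (n + 2) (by omega), h2 (n + 1) (by omega), orbit_add_two]
    abel

/-- The vector `Vₙ eᵢ`. -/
def chebVec (Q : FinQuiver) (i : Fin Q.r) : ℕ → Fin Q.r → ℤ := orbit Q 0 (Pi.single i 1)

lemma chebVec_apply (i : Fin Q.r) (n : ℕ) (l : Fin Q.r) :
    chebVec Q i n l = cheb (adjZ Q) n l i := by
  cases n with
  | zero => simp [chebVec, orbit, cheb]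
  | succ n => simp [chebVec, orbit_succ_eq]

lemma pairForm_chebVec (i : Fin Q.r) (n : ℕ) :
    pairForm Q (chebVec Q i n) (chebVec Q i (n + 1)) = 1 := by
  rw [chebVec, pairForm_orbit]
  simp [pairForm]

lemma exists_eq_single {z : Fin Q.r → ℤ} (hz : 0 ≤ z) (h : z ⬝ᵥ z = 1) :
    ∃ i, z = Pi.single i 1 := by
  obtain ⟨i, hi⟩ : ∃ i, z i ≠ 0 := by
    by_contra! h0
    simp [dotProduct, h0] at h
  rw [dotProduct, ← Finset.add_sum_erase _ _ (Finset.mem_univ i)] at h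
  have h1 : 1 ≤ z i := by have := hz i; simp only [Pi.zero_apply] at this; omega
  have h2 : 0 ≤ ∑ j ∈ Finset.univ.erase i, z j * z j :=
    Finset.sum_nonneg fun j _ => mul_self_nonneg _
  have h3 : ∑ j ∈ Finset.univ.erase i, z j * z j = 0 := by nlinarith
  rw [Finset.sum_eq_zero_iff_of_nonneg fun j _ => mul_self_nonneg _] at h3
  refine ⟨i, funext fun j => ?_⟩
  rcases eq_or_ne j i with rfl | hj
  · rw [Pi.single_eq_same]
    nlinarith
  · rw [Pi.single_eq_of_ne hj]
    exact mul_self_eq_zero.1 (h3 j (by simp [hj]))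

section Count

variable {D : ℕ} {κ : Fin Q.r → Bool}

lemma eq_zero_of_cheb_mulVec_nonpos (hpos : ∀ n ≤ D, ∀ i j, 0 ≤ cheb (adjZ Q) (n + 1) i j)
    (hne : ∀ n ≤ D, ∀ j, ∃ i, cheb (adjZ Q) (n + 1) i j ≠ 0) {y : Fin Q.r → ℤ} (hy : 0 ≤ y)
    (h : cheb (adjZ Q) (D + 1) *ᵥ y ≤ 0) : y = 0 := by
  funext j
  obtain ⟨i, hi⟩ := hne D le_rfl j
  have hnn (l : Fin Q.r) : 0 ≤ cheb (adjZ Q) (D + 1) i l * y l :=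
    mul_nonneg (hpos D le_rfl i l) (hy l)
  have h1 : ∑ l, cheb (adjZ Q) (D + 1) i l * y l = 0 := le_antisymm (h i) (Finset.sum_nonneg fun l _ => hnn l)
  have h2 := (Finset.sum_eq_zero_iff_of_nonneg fun l _ => hnn l).1 h1 j (Finset.mem_univ j)
  exact (mul_eq_zero.1 h2).resolve_left hi

lemma exists_eq_chebVec (hQ : Q.IsDynkin) (hκ : ∀ e, κ (Q.tgt e) = !κ (Q.src e))
    (hD : cheb (adjZ Q) (D + 2) = 0) (hpos : ∀ n ≤ D, ∀ i j, 0 ≤ cheb (adjZ Q) (n + 1) i j)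
    (hne : ∀ n ≤ D, ∀ j, ∃ i, cheb (adjZ Q) (n + 1) i j ≠ 0) {x y : Fin Q.r → ℤ}
    (hx : 0 ≤ x) (hy : 0 ≤ y) (h : pairForm Q x y = 1) :
    ∃ i, ∃ s < D + 2, x = chebVec Q i s ∧ y = chebVec Q i (s + 1) := by
  classical
  rw [pairForm_comm] at h
  have hform (n : ℕ) : pairForm Q (orbit Q y x n) (orbit Q y x (n + 1)) = 1 := by
    rw [pairForm_orbit, h]
  have hneg : ¬ (0 ≤ orbit Q y x (D + 2) ∧ 0 ≤ orbit Q y x (D + 3)) := by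
    rintro ⟨h1, h2⟩
    rw [orbit_succ_eq, hD, zero_mulVec, zero_sub] at h1
    rw [orbit_succ_eq, hD, zero_mulVec, sub_zero, cheb_add_two _ (D + 1), hD, zero_mul, zero_sub,
      neg_mulVec] at h2
    have hx0 := eq_zero_of_cheb_mulVec_nonpos hpos hne hx (neg_nonneg.1 h2)
    have hy0 := eq_zero_of_cheb_mulVec_nonpos hpos hne hy (neg_nonneg.1 h1)
    simp [pairForm, hx0, hy0] at h
  have hex : ∃ n, ¬ (0 ≤ orbit Q y x n ∧ 0 ≤ orbit Q y x (n + 1)) := ⟨_, hneg⟩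
  obtain ⟨m, hm⟩ : ∃ m, Nat.find hex = m + 1 := by
    refine Nat.exists_eq_succ_of_ne_zero fun h0 => ?_
    have := Nat.find_spec hex
    rw [h0] at this
    exact this ⟨hy, hx⟩
  have hmD : m + 1 ≤ D + 2 := hm ▸ Nat.find_min' hex hneg
  have hmin := not_not.1 (Nat.find_min hex (m := m) (by omega))
  have hspec := Nat.find_spec hex
  rw [hm] at hspec
  have h0 : orbit Q y x (m + 1) = 0 :=
    le_antisymm ((pair_nonneg_or_nonpos hQ hκ (hform (m + 1))).resolve_left hspec).1 hmin.2
  have h1 := hform m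
  simp only [pairForm, h0, mulVec_zero, dotProduct_zero, add_zero, sub_zero] at h1
  obtain ⟨i, hi⟩ := exists_eq_single hmin.1 h1
  have hrev := orbit_reverse y x m
  rw [h0, hi] at hrev
  exact ⟨i, m, by omega, (hrev m 1 (by omega)).symm, (hrev (m + 1) 0 (by omega)).symm⟩

lemma chebVec_inj (hne : ∀ n ≤ D, ∀ j, ∃ i, cheb (adjZ Q) (n + 1) i j ≠ 0) {i j : Fin Q.r}
    {s t : ℕ} (hst : s ≤ t) (ht : t < D + 2) (h1 : chebVec Q i s = chebVec Q j t)
    (h2 : chebVec Q i (s + 1) = chebVec Q j (t + 1)) : i = j ∧ s = t := by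
  have hi (p n : ℕ) (h : n + p = s + 1) :
      orbit Q (chebVec Q i (s + 1)) (chebVec Q i s) p = chebVec Q i n :=
    orbit_reverse _ _ s p n h
  have hj (p n : ℕ) (h : n + p = t + 1) :
      orbit Q (chebVec Q j (t + 1)) (chebVec Q j t) p = chebVec Q j n :=
    orbit_reverse _ _ t p n h
  rw [h1, h2] at hi
  obtain rfl : s = t := by
    by_contra hlt
    obtain ⟨n, rfl⟩ : ∃ n, t = s + (n + 1) := ⟨t - s - 1, by omega⟩
    obtain ⟨l, hl⟩ := hne n (by omega) j
    rw [← chebVec_apply, ← hj (s + 1) (n + 1) (by omega), hi (s + 1) 0 (by omega)] at hl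
    exact hl rfl
  refine ⟨?_, rfl⟩
  have h3 : (Pi.single i 1 : Fin Q.r → ℤ) = Pi.single j 1 :=
    (hi s 1 (by omega)).symm.trans (hj s 1 (by omega))
  by_contra hij
  have h4 := congrFun h3 i
  rw [Pi.single_eq_same, Pi.single_eq_of_ne hij] at h4
  exact one_ne_zero h4

theorem ncard_roots (hQ : Q.IsDynkin) (hκ : ∀ e, κ (Q.tgt e) = !κ (Q.src e))
    (hD : cheb (adjZ Q) (D + 2) = 0) (hpos : ∀ n ≤ D, ∀ i j, 0 ≤ cheb (adjZ Q) (n + 1) i j)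
    (hne : ∀ n ≤ D, ∀ j, ∃ i, cheb (adjZ Q) (n + 1) i j ≠ 0) :
    {x : Fin Q.r → ℤ | Q.titsFormZ x = 1}.ncard = Q.r * (D + 2) := by
  let u (p : Fin Q.r × Fin (D + 2)) := colorMix κ (chebVec Q p.1 p.2) (chebVec Q p.1 (p.2 + 1))
  let v (p : Fin Q.r × Fin (D + 2)) := colorMix κ (chebVec Q p.1 (p.2 + 1)) (chebVec Q p.1 p.2)
  have hnn (i : Fin Q.r) (n : ℕ) (hn : n ≤ D + 2) : 0 ≤ chebVec Q i n := by
    intro l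
    rw [chebVec_apply]
    rcases n with - | n
    · simp [cheb]
    rcases (show n ≤ D ∨ n = D + 1 by omega) with h | rfl
    · exact hpos n h l i
    · simp [hD]
  have hu (p) : 0 ≤ u p := colorMix_nonneg κ (hnn _ _ (by omega)) (hnn _ _ (by omega))
  have hv (p) : 0 ≤ v p := colorMix_nonneg κ (hnn _ _ (by omega)) (hnn _ _ (by omega))
  have huv (p) : Q.titsFormZ (u p) + Q.titsFormZ (v p) = 1 := by
    rw [← pairForm_eq hκ, pairForm_chebVec]
  have hparts (p) := parts_sub_eq (hu p) (hv p) (eq_zero_or_of_titsFormZ_add_eq_one hQ (huv p))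
  have hinj : Function.Injective fun p => u p - v p := by
    intro p q h
    dsimp only at h
    have h1 : u p = u q := by rw [← (hparts p).1, h, (hparts q).1]
    have h2 : v p = v q := by rw [← (hparts p).2, h, (hparts q).2]
    have h3 : chebVec Q p.1 p.2 = chebVec Q q.1 q.2 := by
      rw [← colorMix_colorMix κ (chebVec Q p.1 p.2) (chebVec Q p.1 (p.2 + 1)),
        ← colorMix_colorMix κ (chebVec Q q.1 q.2) (chebVec Q q.1 (q.2 + 1))]
      exact congrArg₂ _ h1 h2
    have h4 : chebVec Q p.1 (p.2 + 1) = chebVec Q q.1 (q.2 + 1) := by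
      rw [← colorMix_colorMix κ (chebVec Q p.1 (p.2 + 1)) (chebVec Q p.1 p.2),
        ← colorMix_colorMix κ (chebVec Q q.1 (q.2 + 1)) (chebVec Q q.1 q.2)]
      exact congrArg₂ _ h2 h1
    rcases le_total (p.2 : ℕ) q.2 with hle | hle
    · obtain ⟨h5, h6⟩ := chebVec_inj hne hle q.2.2 h3 h4
      exact Prod.ext h5 (Fin.ext h6)
    · obtain ⟨h5, h6⟩ := chebVec_inj hne hle p.2.2 h3.symm h4.symm
      exact Prod.ext h5.symm (Fin.ext h6.symm)
  have hrange : {x : Fin Q.r → ℤ | Q.titsFormZ x = 1} = Set.range fun p => u p - v p := by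
    ext w
    constructor
    · intro hw
      have h1 : pairForm Q (colorMix κ w⁺ w⁻) (colorMix κ w⁻ w⁺) = 1 := by
        rw [pairForm_eq hκ, colorMix_colorMix, colorMix_colorMix]
        exact titsFormZ_posPart_add_negPart hQ hw
      obtain ⟨i, s, hs, h2, h3⟩ := exists_eq_chebVec hQ hκ hD hpos hne
        (colorMix_nonneg κ (posPart_nonneg w) (negPart_nonneg w))
        (colorMix_nonneg κ (negPart_nonneg w) (posPart_nonneg w)) h1
      refine ⟨(i, ⟨s, hs⟩), ?_⟩
      simp only [u, v]
      rw [← h2, ← h3, colorMix_colorMix, colorMix_colorMix, posPart_sub_negPart]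
    · rintro ⟨p, rfl⟩
      exact titsFormZ_sub_eq_one hQ (huv p)
  rw [hrange, ← Set.image_univ, Set.ncard_image_of_injective _ hinj, Set.ncard_univ,
    Nat.card_prod, Nat.card_fin, Nat.card_fin]

end Count

lemma coeff_ppHilb (n : ℕ) (i j : Fin Q.r) :
    PowerSeries.coeff n (ppHilb k Q i j) = ((dimZ k Q n i j : ℤ) : k) := by
  simp [ppHilb, dimZ, cdim]

lemma coeff_ppHilb_mul_doubleAdj (n : ℕ) (i j : Fin Q.r) :
    PowerSeries.coeff n ((ppHilb k Q * Q.doubleAdj.map (Nat.cast : ℕ → PowerSeries k)) i j) =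
      (((dimZ k Q n * adjZ Q) i j : ℤ) : k) := by
  simp only [mul_apply, map_sum, map_apply, adjZ, Int.cast_sum, Int.cast_mul, Int.cast_natCast]
  refine Finset.sum_congr rfl fun l _ => ?_
  rw [← coeff_ppHilb, ← map_natCast (PowerSeries.C (R := k)), PowerSeries.coeff_mul_C]

lemma ppHilb_mul_apply (i j : Fin Q.r) :
    (ppHilb k Q * (1 - (PowerSeries.X : PowerSeries k) •
        (Q.doubleAdj.map (Nat.cast : ℕ → PowerSeries k)) +
      (PowerSeries.X ^ 2 : PowerSeries k) •
        (1 : Matrix (Fin Q.r) (Fin Q.r) (PowerSeries k)))) i j =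
      ppHilb k Q i j -
        PowerSeries.X * (ppHilb k Q * Q.doubleAdj.map (Nat.cast : ℕ → PowerSeries k)) i j +
        PowerSeries.X * (PowerSeries.X * ppHilb k Q i j) := by
  rw [Matrix.mul_add, Matrix.mul_sub, Matrix.mul_one, Matrix.mul_smul, Matrix.mul_smul,
    Matrix.mul_one, Matrix.add_apply, Matrix.sub_apply, Matrix.smul_apply, Matrix.smul_apply,
    smul_eq_mul, smul_eq_mul, sq, mul_assoc]

theorem ppHilb_mul_eq [FiniteDimensional k (PreprojAlg k Q)] {ν : Equiv.Perm (Fin Q.r)} {D : ℕ}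
    (hrec : ∀ n i j, dimZ k Q (n + 2) i j + dimZ k Q n i j =
      (dimZ k Q (n + 1) * adjZ Q) i j + if n = D ∧ ν i = j then 1 else 0) :
    ppHilb k Q *
      (1 - (PowerSeries.X : PowerSeries k) • (Q.doubleAdj.map (Nat.cast : ℕ → PowerSeries k))
        + (PowerSeries.X ^ 2 : PowerSeries k) •
            (1 : Matrix (Fin Q.r) (Fin Q.r) (PowerSeries k))) =
    1 + Matrix.of (fun i j : Fin Q.r =>
          if ν i = j then (PowerSeries.X ^ (D + 2) : PowerSeries k) else 0) := by
  ext i j n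
  rw [ppHilb_mul_apply, Matrix.add_apply, of_apply, map_add, map_add, map_sub]
  have hone (m : ℕ) : PowerSeries.coeff m ((1 : Matrix (Fin Q.r) (Fin Q.r) (PowerSeries k)) i j) =
      if m = 0 then (((1 : Matrix (Fin Q.r) (Fin Q.r) ℤ) i j : ℤ) : k) else 0 := by
    rw [one_apply, one_apply]
    split_ifs <;> simp_all [PowerSeries.coeff_one]
  have hperm (m : ℕ) : PowerSeries.coeff m
      (if ν i = j then (PowerSeries.X ^ (D + 2) : PowerSeries k) else 0) =
      if m = D + 2 ∧ ν i = j then 1 else 0 := by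
    split_ifs <;> simp_all [PowerSeries.coeff_X_pow]
  rw [hone, hperm]
  rcases n with - | - | n
  · simp [coeff_ppHilb, dimZ_zero]
  · rw [PowerSeries.coeff_succ_X_mul, PowerSeries.coeff_succ_X_mul,
      PowerSeries.coeff_zero_X_mul, coeff_ppHilb, coeff_ppHilb_mul_doubleAdj, dimZ_zero,
      zero_add, dimZ_one]
    simp
  · rw [if_neg (by omega), PowerSeries.coeff_succ_X_mul, PowerSeries.coeff_succ_X_mul,
      PowerSeries.coeff_succ_X_mul, coeff_ppHilb, coeff_ppHilb, coeff_ppHilb_mul_doubleAdj,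
      zero_add]
    have h := congrArg (Int.cast : ℤ → k) (hrec n i j)
    push_cast at h
    simp only [Nat.add_right_cancel_iff]
    linear_combination h

end Preproj

/-- **Hilbert series of the preprojective algebra, Dynkin case, in arbitrary
characteristic** (Malkin–Ostrik–Vybornov in characteristic zero).
Let `Q` be a connected finite acyclic Dynkin quiver with Coxeter number `h`,
`C` the adjacency matrix of the double quiver, `ν` a Nakayama permutation of
`Π(Q)` and `P` its permutation matrix.  Then
`h_Π(t)·(1 - C t + t²·1) = 1 + P t^h` in the ring of `r × r` matrices over
`k[[t]]`; equivalently `h_Π(t) = (1 + P t^h)/(1 - C t + t²)`. -/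
theorem preprojective_hilbert_series_dynkin
    (k : Type) [Field k] (Q : FinQuiver) (hr : 0 < Q.r)
    (hconn : Q.Connected) (hacyc : Q.Acyclic) (hdynkin : Q.IsDynkin)
    (h : ℕ) (hcox : Q.IsCoxeterNumber h)
    (ν : Equiv.Perm (Fin Q.r)) (hν : IsNakayamaPerm k Q ν) :
    ppHilb k Q *
      (1 - (PowerSeries.X : PowerSeries k) • (Q.doubleAdj.map (Nat.cast : ℕ → PowerSeries k))
        + (PowerSeries.X ^ 2 : PowerSeries k) •
            (1 : Matrix (Fin Q.r) (Fin Q.r) (PowerSeries k))) =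
    1 + Matrix.of (fun i j : Fin Q.r =>
          if ν i = j then (PowerSeries.X ^ h : PowerSeries k) else 0) := by
  have := Preproj.finiteDimensional_of_isNakayamaPerm hr hν
  obtain ⟨D, hrec, hD, hpos, hne⟩ := Preproj.exists_topDegree_const hr hconn hν
  obtain ⟨κ, hκ⟩ := Preproj.exists_bicoloring hr hconn hacyc hdynkin
  have hroots := Preproj.ncard_roots hdynkin hκ hD hpos hne
  rw [FinQuiver.IsCoxeterNumber, hroots] at hcox
  obtain rfl := Nat.eq_of_mul_eq_mul_left hr hcox
  exact Preproj.ppHilb_mul_eq hrec
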